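/- arXiv:1412.3025 — 6 statements merged into one kernel-verified Lean document; each statement's English description precedes it below -/
import Mathlib

section
/- Let (M,E,η) be a factorable monoid satisfying the stronger conditions η′(x·s) = η′(η′(x)·s) and η̄(x·s) = η̄(x)·η̄(η′(x)·s) for all x ∈ M and s ∈ E. Then for words I, J ∈ F_n with I ∼ J (equivalence in Q_n') and any tuple (x_{n+1},…,x_1) ∈ E^{n+1} of generators, f_I(x_{n+1},…,x_1) = f_J(x_{n+1},…,x_1), where for I = (i_s,…,i_1) one sets f_I = f_{i_s}∘⋯∘f_{i_1} : M^{n+1} → M^{n+1}. -/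
/-- The word length of `m` with respect to the generating set `E`:
the least `n` such that `m` is a product of `n` elements of `E`. -/
noncomputable def wordLength {M : Type*} [Monoid M] (E : Set M) (m : M) : ℕ :=
  sInf {n | ∃ l : List M, (∀ x ∈ l, x ∈ E) ∧ l.length = n ∧ l.prod = m}

/-- `E` is a generating set of the monoid `M`. -/
def IsGenSet {M : Type*} [Monoid M] (E : Set M) : Prop :=
  ∀ m : M, ∃ l : List M, (∀ x ∈ l, x ∈ E) ∧ l.prod = m

/-- The pair `(a, b)` is geodesic with respect to `E`. -/
noncomputable def Geodesic {M : Type*} [Monoid M] (E : Set M) (a b : M) : Prop :=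
  wordLength E (a * b) = wordLength E a + wordLength E b

/-- A factorization map `η = (η̄, η′)` on `(M, E)`. -/
noncomputable def IsFactorizationMap {M : Type*} [Monoid M] (E : Set M)
    (η : M → M × M) : Prop :=
  (∀ m, (η m).1 * (η m).2 = m) ∧
  (∀ m, wordLength E m = wordLength E (η m).1 + wordLength E (η m).2) ∧
  (∀ m, m ≠ 1 → (η m).2 ∈ E) ∧
  η 1 = (1, 1)

/-- The map `f₁ : M³ → M³` applying `η` to the product of the two right entries,
with triples written `(x₃, x₂, x₁)`. -/
def f1 {M : Type*} [Monoid M] (η : M → M × M) (p : M × M × M) : M × M × M :=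
  (p.1, η (p.2.1 * p.2.2))

/-- The map `f₂ : M³ → M³` applying `η` to the product of the two left entries. -/
def f2 {M : Type*} [Monoid M] (η : M → M × M) (p : M × M × M) : M × M × M :=
  ((η (p.1 * p.2.1)).1, (η (p.1 * p.2.1)).2, p.2.2)

/-- The sum of the word lengths of the entries of a triple. -/
noncomputable def tnorm {M : Type*} [Monoid M] (E : Set M) (p : M × M × M) : ℕ :=
  wordLength E p.1 + wordLength E p.2.1 + wordLength E p.2.2

/-- `η` is a factorability structure on `(M, E)`: it is a factorization map and the
three maps `f₁f₂f₁f₂`, `f₂f₁f₂`, `f₂f₁f₂f₁ : M³ → M³` are equal in the graded sense. -/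
noncomputable def IsFactorable {M : Type*} [Monoid M] (E : Set M) (η : M → M × M) : Prop :=
  IsFactorizationMap E η ∧
  ∀ p : M × M × M,
    (f1 η (f2 η (f1 η (f2 η p))) = f2 η (f1 η (f2 η p)) ∧
     f2 η (f1 η (f2 η p)) = f2 η (f1 η (f2 η (f1 η p)))) ∨
    (tnorm E (f1 η (f2 η (f1 η (f2 η p)))) < tnorm E p ∧
     tnorm E (f2 η (f1 η (f2 η p))) < tnorm E p ∧
     tnorm E (f2 η (f1 η (f2 η (f1 η p)))) < tnorm E p)

/-- `η` is a weak factorability structure on `(M, E)`. -/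
noncomputable def IsWeaklyFactorable {M : Type*} [Monoid M] (E : Set M)
    (η : M → M × M) : Prop :=
  IsFactorizationMap E η ∧
  ∀ x : M, ∀ t ∈ E,
    Geodesic E (η x).2 t →
    Geodesic E (η x).1 (η ((η x).2 * t)).1 →
    Geodesic E x t ∧
    (η (x * t)).2 = (η ((η x).2 * t)).2 ∧
    (η (x * t)).1 = (η x).1 * (η ((η x).2 * t)).1

/-- `η` satisfies the recognition principle. -/
def RecognitionPrinciple {M : Type*} [Monoid M] (E : Set M) (η : M → M × M) : Prop :=
  ∀ m : M, ∀ a ∈ E, (η (m * a) = (m, a) ↔ η ((η m).2 * a) = ((η m).2, a))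


/-- `w` is a word of the free monoid `F_n` on the letters `{1, …, n}`. -/
def InF (n : ℕ) (w : List ℕ) : Prop := ∀ a ∈ w, 1 ≤ a ∧ a ≤ n

/-- The congruence on a free monoid of words generated by a relation `r`. -/
inductive CongClosure (r : List ℕ → List ℕ → Prop) : List ℕ → List ℕ → Prop
  | rel (u v : List ℕ) {x y : List ℕ} : r x y → CongClosure r (u ++ x ++ v) (u ++ y ++ v)
  | refl (x : List ℕ) : CongClosure r x x
  | symm {x y : List ℕ} : CongClosure r x y → CongClosure r y x
  | trans {x y z : List ℕ} : CongClosure r x y → CongClosure r y z → CongClosure r x z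

/-- The defining relations of `P_n`: `ab = ba` for `|a − b| ≥ 2`, and `aa = a`. -/
inductive PRel (n : ℕ) : List ℕ → List ℕ → Prop
  | comm (a b : ℕ) : 1 ≤ a → a ≤ n → 1 ≤ b → b ≤ n → (a + 2 ≤ b ∨ b + 2 ≤ a) →
      PRel n [a, b] [b, a]
  | idem (a : ℕ) : 1 ≤ a → a ≤ n → PRel n [a, a] [a]

/-- The congruence `∼_P` on `F_n`. -/
def PCong (n : ℕ) : List ℕ → List ℕ → Prop := CongClosure (PRel n)

/-- The defining relations of `Q_n`: those of `P_n` together with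
`k(k+1)k(k+1) = (k+1)k(k+1)` and `(k+1)k(k+1)k = (k+1)k(k+1)`. -/
inductive QRel (n : ℕ) : List ℕ → List ℕ → Prop
  | ofP {x y : List ℕ} : PRel n x y → QRel n x y
  | braid1 (k : ℕ) : 1 ≤ k → k + 1 ≤ n → QRel n [k, k + 1, k, k + 1] [k + 1, k, k + 1]
  | braid2 (k : ℕ) : 1 ≤ k → k + 1 ≤ n → QRel n [k + 1, k, k + 1, k] [k + 1, k, k + 1]

/-- The congruence `∼_Q` on `F_n`. -/
def QCong (n : ℕ) : List ℕ → List ℕ → Prop := CongClosure (QRel n)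

/-- The defining relations of `Q_n'`: those of `Q_n` together with the pairs `(kJ, J)`
for which there exists `I ∈ F_n` with `kIJ ∼_Q IJ`, `kI ∼_P Ik` and `k` not occurring
in `I`. -/
inductive RRel (n : ℕ) : List ℕ → List ℕ → Prop
  | ofQ {x y : List ℕ} : QRel n x y → RRel n x y
  | absorb (k : ℕ) (I J : List ℕ) : 1 ≤ k → k ≤ n → InF n I → InF n J →
      QCong n ((k :: I) ++ J) (I ++ J) → PCong n (k :: I) (I ++ [k]) → k ∉ I →
      RRel n (k :: J) J

/-- The congruence `∼` on `F_n`; the quotient monoid `F_n/∼` is `Q_n'`. -/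
def RCong (n : ℕ) : List ℕ → List ℕ → Prop := CongClosure (RRel n)

/-- The shift homomorphism `sh_k : F_{n−k} → F_n`, `i ↦ i + k`. -/
def sh (k : ℕ) (w : List ℕ) : List ℕ := w.map (· + k)

/-- The word `I_a^b = a·(a+1)⋯b`. -/
def Iseg (a b : ℕ) : List ℕ := List.range' a (b + 1 - a)

/-- The map `f_i : M^{n+1} → M^{n+1}` on tuples `(x_{n+1}, …, x_1)` (encoded as
functions `ℕ → M`, the entry `x_j` being the value at `j`): it replaces the pair
`(x_{i+1}, x_i)` by `(η̄(x_{i+1}·x_i), η′(x_{i+1}·x_i))`. -/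
def fApply {M : Type*} [Monoid M] (η : M → M × M) (i : ℕ) (v : ℕ → M) : ℕ → M :=
  fun j =>
    if j = i + 1 then (η (v (i + 1) * v i)).1
    else if j = i then (η (v (i + 1) * v i)).2
    else v j

/-- For a word `I = (i_s, …, i_1)` (a list with `i_s` first), the composition
`f_I = f_{i_s} ∘ ⋯ ∘ f_{i_1}`. -/
def fWord {M : Type*} [Monoid M] (η : M → M × M) (I : List ℕ) (v : ℕ → M) : ℕ → M :=
  I.foldr (fun i w => fApply η i w) v

/-!
The elements `s` for which the stronger condition holds with every `x` are closed under products, so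
it holds for all `s ∈ M`, and the identity `f_I = f_J` can be proved on arbitrary tuples.

For all `s`, the condition says that `f₂f₁f₂` sends `(x, y, z)` to `(η̄η̄m, η′η̄m, η′m)` with
`m = xyz`. This depends on `m` only, whence `f₂f₁f₂f₁ = f₂f₁f₂`. A triple of this form is fixed by
`f₂f₁f₂`, which therefore does not lower its length; the graded axiom then forces `f₁` to fix it
too, whence `f₁f₂f₁f₂ = f₂f₁f₂`.

For the pairs `(kJ, J)`: if `kI ∼_P Ik` and `k` does not occur in `I`, then every letter of `I`
differs from `k` by at least `2`. So `f_I` leaves the entries at `k` and `k + 1` alone, and these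
decide whether a tuple is fixed by `f_k`.
-/

section Factorization

variable {M : Type*} [Monoid M] {E : Set M} {η : M → M × M}

theorem wordLength_le_one_of_mem {e : M} (he : e ∈ E) : wordLength E e ≤ 1 :=
  Nat.sInf_le ⟨[e], by simpa using he, rfl, by simp⟩

theorem IsGenSet.eq_one_of_wordLength_eq_zero (hgen : IsGenSet E) {m : M}
    (hm : wordLength E m = 0) : m = 1 := by
  rcases Nat.sInf_eq_zero.1 hm with ⟨l, -, hlen, rfl⟩ | hempty
  · rw [List.length_eq_zero_iff.1 hlen, List.prod_nil]
  · obtain ⟨l, hl, hprod⟩ := hgen m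
    exact (Set.eq_empty_iff_forall_notMem.1 hempty l.length ⟨l, hl, rfl, hprod⟩).elim

theorem IsFactorizationMap.apply_of_mem (hη : IsFactorizationMap E η) (hgen : IsGenSet E)
    (h1 : (1 : M) ∉ E) {e : M} (he : e ∈ E) : η e = (1, e) := by
  obtain ⟨hmul, hlen, hmem, -⟩ := hη
  have hsnd : wordLength E (η e).2 ≠ 0 := fun h =>
    h1 (hgen.eq_one_of_wordLength_eq_zero h ▸ hmem e fun h => h1 (h ▸ he))
  have hfst : (η e).1 = 1 := hgen.eq_one_of_wordLength_eq_zero <| by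
    have := hlen e
    have := wordLength_le_one_of_mem he
    omega
  exact Prod.ext hfst (by simpa [hfst] using hmul e)

theorem IsFactorizationMap.apply_snd (hη : IsFactorizationMap E η) (hgen : IsGenSet E)
    (h1 : (1 : M) ∉ E) (m : M) : η (η m).2 = (1, (η m).2) := by
  by_cases hm : m = 1
  · simp [hm, hη.2.2.2]
  · exact hη.apply_of_mem hgen h1 (hη.2.2.1 m hm)

/-- The stronger condition on `η` for a fixed right factor `s`: the factorization of `x * s` is
obtained from `η x` by refactoring `η′(x) * s` only. The factor `s` need not be a generator. -/
def IsStrongAt (η : M → M × M) (s : M) : Prop :=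
  ∀ x, η (x * s) = ((η x).1 * (η ((η x).2 * s)).1, (η ((η x).2 * s)).2)

theorem IsStrongAt.mul {s t : M} (hs : IsStrongAt η s) (ht : IsStrongAt η t) :
    IsStrongAt η (s * t) := by
  intro x
  rw [← mul_assoc, ← mul_assoc, ht (x * s), ht ((η x).2 * s), hs x, mul_assoc]

theorem IsFactorizationMap.isStrongAt (hη : IsFactorizationMap E η) (hgen : IsGenSet E)
    (hE : ∀ s ∈ E, IsStrongAt η s) (s : M) : IsStrongAt η s := by
  obtain ⟨l, hl, rfl⟩ := hgen s
  refine List.prod_induction (IsStrongAt η) (fun _ _ => IsStrongAt.mul) ?_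
    fun s hs => hE s (hl s hs)
  by_cases h1 : (1 : M) ∈ E
  · exact hE 1 h1
  · intro x
    simp [hη.apply_snd hgen h1]

end Factorization

section Triples

variable {M : Type*} [Monoid M] {E : Set M} {η : M → M × M}

/-- The triple `(η̄η̄m, η′η̄m, η′m)` obtained by splitting off two factors of `m` from the right. -/
def normalTriple (η : M → M × M) (m : M) : M × M × M :=
  ((η (η m).1).1, (η (η m).1).2, (η m).2)

theorem f2_f1_f2_eq_normalTriple (hs : ∀ s, IsStrongAt η s) (p : M × M × M) :
    f2 η (f1 η (f2 η p)) = normalTriple η (p.1 * p.2.1 * p.2.2) := by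
  simp only [f1, f2, normalTriple, hs p.2.2 (p.1 * p.2.1)]

theorem normalTriple_prod (hmul : ∀ m, (η m).1 * (η m).2 = m) (m : M) :
    (normalTriple η m).1 * (normalTriple η m).2.1 * (normalTriple η m).2.2 = m := by
  simp only [normalTriple, hmul]

theorem f2_f1_f2_f1 (hmul : ∀ m, (η m).1 * (η m).2 = m) (hs : ∀ s, IsStrongAt η s)
    (p : M × M × M) : f2 η (f1 η (f2 η (f1 η p))) = f2 η (f1 η (f2 η p)) := by
  rw [f2_f1_f2_eq_normalTriple hs, f2_f1_f2_eq_normalTriple hs]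
  simp only [f1, mul_assoc, hmul]

theorem IsFactorable.f1_normalTriple (hfac : IsFactorable E η) (hs : ∀ s, IsStrongAt η s) (m : M) :
    f1 η (normalTriple η m) = normalTriple η m := by
  obtain ⟨⟨hmul, -⟩, hgraded⟩ := hfac
  have hfix : f2 η (f1 η (f2 η (normalTriple η m))) = normalTriple η m := by
    rw [f2_f1_f2_eq_normalTriple hs, normalTriple_prod hmul]
  rcases hgraded (normalTriple η m) with ⟨h, -⟩ | ⟨-, hlt, -⟩
  · rwa [hfix] at h
  · rw [hfix] at hlt
    exact (lt_irrefl _ hlt).elim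

theorem IsFactorable.f1_f2_f1_f2 (hfac : IsFactorable E η) (hs : ∀ s, IsStrongAt η s)
    (p : M × M × M) : f1 η (f2 η (f1 η (f2 η p))) = f2 η (f1 η (f2 η p)) := by
  rw [f2_f1_f2_eq_normalTriple hs, hfac.f1_normalTriple hs]

end Triples

section Tuples

variable {M : Type*} [Monoid M] {η : M → M × M}

theorem fWord_cons (i : ℕ) (I : List ℕ) (v : ℕ → M) :
    fWord η (i :: I) v = fApply η i (fWord η I v) := rfl

theorem fWord_append (I J : List ℕ) (v : ℕ → M) :
    fWord η (I ++ J) v = fWord η I (fWord η J v) :=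
  List.foldr_append

theorem fWord_apply_of_notMem {I : List ℕ} {j : ℕ} (hI : ∀ i ∈ I, i ≠ j ∧ i + 1 ≠ j)
    (v : ℕ → M) : fWord η I v j = v j := by
  induction I with
  | nil => rfl
  | cons i I ih =>
    obtain ⟨⟨hi, hi'⟩, hI⟩ := List.forall_mem_cons.1 hI
    rw [fWord_cons, fApply, if_neg hi'.symm, if_neg hi.symm, ih hI]

theorem fApply_eq_self_iff {k : ℕ} {v : ℕ → M} :
    fApply η k v = v ↔ η (v (k + 1) * v k) = (v (k + 1), v k) := by
  constructor
  · intro h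
    exact Prod.ext (by simpa [fApply] using congrFun h (k + 1))
      (by simpa [fApply] using congrFun h k)
  · intro h
    funext j
    grind [fApply]

theorem fApply_idem (hmul : ∀ m, (η m).1 * (η m).2 = m) (k : ℕ) (v : ℕ → M) :
    fApply η k (fApply η k v) = fApply η k v := by
  rw [fApply_eq_self_iff]
  simp [fApply, hmul]

theorem fApply_comm {a b : ℕ} (hab : a + 2 ≤ b) (v : ℕ → M) :
    fApply η a (fApply η b v) = fApply η b (fApply η a v) := by
  funext j
  grind [fApply]

/-- The entries `(v_{k+2}, v_{k+1}, v_k)`, on which `f_k` and `f_{k+1}` act as `f₁` and `f₂`. -/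
def tripleAt (k : ℕ) (v : ℕ → M) : M × M × M := (v (k + 2), v (k + 1), v k)

theorem tripleAt_fApply (k : ℕ) (v : ℕ → M) :
    tripleAt k (fApply η k v) = f1 η (tripleAt k v) := by
  simp [tripleAt, fApply, f1]

theorem tripleAt_fApply_succ (k : ℕ) (v : ℕ → M) :
    tripleAt k (fApply η (k + 1) v) = f2 η (tripleAt k v) := by
  have hk : k ≠ k + 1 + 1 := by omega
  simp [tripleAt, fApply, f2, hk]

theorem fWord_eq_of_tripleAt_eq {k : ℕ} {I J : List ℕ} (hI : ∀ i ∈ I, i = k ∨ i = k + 1)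
    (hJ : ∀ i ∈ J, i = k ∨ i = k + 1)
    (h : ∀ v, tripleAt k (fWord η I v) = tripleAt k (fWord η J v)) :
    fWord η I = fWord η J := by
  funext v j
  by_cases hj : j = k ∨ j = k + 1 ∨ j = k + 2
  · have htriple := h v
    simp only [tripleAt, Prod.mk.injEq] at htriple
    rcases hj with rfl | rfl | rfl
    exacts [htriple.2.2, htriple.2.1, htriple.1]
  · rw [fWord_apply_of_notMem (fun i hi => by have := hI i hi; omega),
      fWord_apply_of_notMem (fun i hi => by have := hJ i hi; omega)]

end Tuples

section Congruences

theorem PCong.find?_eq {n a b : ℕ} (hab : a ≤ b + 1) (hba : b ≤ a + 1) {x y : List ℕ}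
    (h : PCong n x y) :
    x.find? (fun c => c = a ∨ c = b) = y.find? (fun c => c = a ∨ c = b) := by
  induction h with
  | rel u v h =>
    simp only [List.find?_append]
    congr 2
    cases h with
    | comm c d _ _ _ _ hcd => grind
    | idem c => grind
  | refl x => rfl
  | symm _ ih => exact ih.symm
  | trans _ _ ih ih' => exact ih.trans ih'

theorem PCong.far_of_mem {n k : ℕ} {I : List ℕ} (h : PCong n (k :: I) (I ++ [k])) (hk : k ∉ I)
    {b : ℕ} (hb : b ∈ I) : b + 2 ≤ k ∨ k + 2 ≤ b := by
  by_contra! hnear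
  -- The first letter among `k` and `b` is `k` in `kI`, but lies in `I` in `Ik`.
  have hfind := h.find?_eq (a := k) (b := b) (by omega) (by omega)
  obtain ⟨c, hc⟩ : ∃ c, I.find? (fun c => c = k ∨ c = b) = some c :=
    Option.isSome_iff_exists.1 (List.find?_isSome.2 ⟨b, hb, by simp⟩)
  rw [List.find?_append, hc] at hfind
  have hkc : k = c := by simpa using hfind
  exact hk (hkc ▸ List.mem_of_find?_eq_some hc)

variable {M : Type*} [Monoid M] {E : Set M} {η : M → M × M}

theorem CongClosure.fWord_eq {r : List ℕ → List ℕ → Prop}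
    (hr : ∀ x y, r x y → fWord η x = fWord η y) {x y : List ℕ} (h : CongClosure r x y) :
    fWord η x = fWord η y := by
  induction h with
  | rel u w h =>
    funext v
    simp only [fWord_append, hr _ _ h]
  | refl x => rfl
  | symm _ ih => exact ih.symm
  | trans _ _ ih ih' => exact ih.trans ih'

theorem PRel.fWord_eq (hmul : ∀ m, (η m).1 * (η m).2 = m) {n : ℕ} {x y : List ℕ}
    (h : PRel n x y) : fWord η x = fWord η y := by
  funext v
  cases h with
  | comm a b _ _ _ _ hab =>
    rcases hab with hab | hba
    · exact fApply_comm hab v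
    · exact (fApply_comm hba v).symm
  | idem a => exact fApply_idem hmul a v

theorem QRel.fWord_eq (hfac : IsFactorable E η) (hs : ∀ s, IsStrongAt η s) {n : ℕ}
    {x y : List ℕ} (h : QRel n x y) : fWord η x = fWord η y := by
  cases h with
  | ofP h => exact h.fWord_eq hfac.1.1
  | braid1 k =>
    refine fWord_eq_of_tripleAt_eq (k := k) (by simp) (by simp) fun v => ?_
    simp only [fWord_cons, tripleAt_fApply, tripleAt_fApply_succ]
    exact hfac.f1_f2_f1_f2 hs _
  | braid2 k =>
    refine fWord_eq_of_tripleAt_eq (k := k) (by simp) (by simp) fun v => ?_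
    simp only [fWord_cons, tripleAt_fApply, tripleAt_fApply_succ]
    exact f2_f1_f2_f1 hfac.1.1 hs _

theorem fApply_eq_self_of_fApply_fWord_eq {k : ℕ} {I : List ℕ}
    (hI : ∀ i ∈ I, i + 2 ≤ k ∨ k + 2 ≤ i) {v : ℕ → M}
    (h : fApply η k (fWord η I v) = fWord η I v) : fApply η k v = v := by
  rw [fApply_eq_self_iff] at h ⊢
  rwa [fWord_apply_of_notMem (fun i hi => by have := hI i hi; omega),
    fWord_apply_of_notMem (fun i hi => by have := hI i hi; omega)] at h

theorem RRel.fWord_eq (hfac : IsFactorable E η) (hs : ∀ s, IsStrongAt η s) {n : ℕ}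
    {x y : List ℕ} (h : RRel n x y) : fWord η x = fWord η y := by
  cases h with
  | ofQ h => exact h.fWord_eq hfac hs
  | absorb k I _ _ _ _ _ hQ hP hkI =>
    funext v
    have hfix : fApply η k (fWord η I (fWord η y v)) = fWord η I (fWord η y v) := by
      simpa only [fWord_append, fWord_cons] using
        congrFun (CongClosure.fWord_eq (fun _ _ h => h.fWord_eq hfac hs) hQ) v
    exact fApply_eq_self_of_fApply_fWord_eq (fun _ => hP.far_of_mem hkI) hfix

end Congruences

theorem evaluation_lemma_Q'_general
    {M : Type*} [Monoid M] {E : Set M} (hgen : IsGenSet E)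
    {η : M → M × M} (hfac : IsFactorable E η)
    (hstrong : ∀ x : M, ∀ s ∈ E,
      (η (x * s)).2 = (η ((η x).2 * s)).2 ∧
      (η (x * s)).1 = (η x).1 * (η ((η x).2 * s)).1)
    {n : ℕ} {I J : List ℕ} (hIJ : RCong n I J) : fWord η I = fWord η J := by
  have hs : ∀ s, IsStrongAt η s := hfac.1.isStrongAt hgen fun s hs x =>
    Prod.ext (hstrong x s hs).2 (hstrong x s hs).1
  exact CongClosure.fWord_eq (fun _ _ h => h.fWord_eq hfac hs) hIJ

/-- Let `(M, E, η)` be a factorable monoid satisfying the stronger conditions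
`η′(x·s) = η′(η′(x)·s)` and `η̄(x·s) = η̄(x)·η̄(η′(x)·s)` for all `x ∈ M`, `s ∈ E`. Then
for words `I ∼ J` in `F_n` (equivalence in `Q_n'`) and every tuple of generators
`(x_{n+1}, …, x_1) ∈ E^{n+1}` one has `f_I(x_{n+1}, …, x_1) = f_J(x_{n+1}, …, x_1)`. -/
theorem evaluation_lemma_Q'
    {M : Type*} [Monoid M] (E : Set M) (h1 : (1 : M) ∉ E) (hgen : IsGenSet E)
    (η : M → M × M) (hfac : IsFactorable E η)
    (hstrong : ∀ x : M, ∀ s ∈ E,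
      (η (x * s)).2 = (η ((η x).2 * s)).2 ∧
      (η (x * s)).1 = (η x).1 * (η ((η x).2 * s)).1) :
    ∀ (n : ℕ) (I J : List ℕ), InF n I → InF n J → RCong n I J →
      ∀ v : ℕ → M, (∀ j, 1 ≤ j → j ≤ n + 1 → v j ∈ E) →
        fWord η I v = fWord η J v :=
  fun _ _ _ _ _ hIJ v _ => congrFun (evaluation_lemma_Q'_general hgen hfac hstrong hIJ) v
end

section
/- For every n ≥ 1, there are only finitely many words in F_n that are simultaneously reduced, right-most, and small. -/
/-- A word is reduced if it has no two adjacent equal letters. -/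
def Reduced (w : List ℕ) : Prop := w.Chain' (· ≠ ·)

/-- A word `(i_s, …, i_1)` is right-most if whenever two adjacent letters differ by at
least `2`, the left one is smaller. -/
def RightMost (w : List ℕ) : Prop :=
  w.Chain' (fun a b => (a + 2 ≤ b ∨ b + 2 ≤ a) → a < b)

/-- A word `I ∈ F_n` is small if it is not `∼_P`-equivalent to any word of the form
`J·(k+1)·k·(k+1)·K`. -/
def SmallWord (n : ℕ) (w : List ℕ) : Prop :=
  ¬ ∃ (J K : List ℕ) (k : ℕ), 1 ≤ k ∧ k + 1 ≤ n ∧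
      PCong n w (J ++ [k + 1, k, k + 1] ++ K)

section Words

variable {n m : ℕ} {u w : List ℕ}

theorem InF.of_infix (hw : InF n w) (h : u <:+: w) : InF n u :=
  fun a ha => hw a (h.subset ha)

theorem InF.of_notMem_succ (hw : InF (m + 1) w) (hm : m + 1 ∉ w) : InF m w := by
  intro a ha
  have hne : a ≠ m + 1 := ne_of_mem_of_not_mem ha hm
  have hle := hw a ha
  lia

theorem InF.length_le_of_nodup (hw : InF n w) (hnodup : w.Nodup) : w.length ≤ n := by
  have hsub : w.toFinset ⊆ Finset.Icc 1 n := fun a ha =>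
    Finset.mem_Icc.2 (hw a (List.mem_toFinset.1 ha))
  simpa [List.toFinset_card_of_nodup hnodup] using Finset.card_le_card hsub

theorem RightMost.eq_succ_of_le {a b : ℕ} (hright : RightMost (a :: b :: w))
    (hred : Reduced (a :: b :: w)) (hba : b ≤ a) : a = b + 1 := by
  have hne : a ≠ b := (List.isChain_cons_cons.1 hred).1
  have hlt : a + 2 ≤ b ∨ b + 2 ≤ a → a < b := (List.isChain_cons_cons.1 hright).1
  lia

end Words

namespace CongClosure

variable {r : List ℕ → List ℕ → Prop} {x y : List ℕ}

theorem append_left_right (h : CongClosure r x y) (u v : List ℕ) :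
    CongClosure r (u ++ x ++ v) (u ++ y ++ v) := by
  induction h with
  | rel u' v' hxy => simpa only [List.append_assoc] using rel (u ++ u') (v' ++ v) hxy
  | refl x => exact refl _
  | symm _ ih => exact symm ih
  | trans _ _ ih₁ ih₂ => exact trans ih₁ ih₂

theorem append_singleton_comm {b : ℕ} {v : List ℕ}
    (h : ∀ a ∈ v, CongClosure r [a, b] [b, a]) : CongClosure r (v ++ [b]) (b :: v) := by
  induction v with
  | nil => exact refl _
  | cons a v ih =>
    obtain ⟨hab, hv⟩ := List.forall_mem_cons.1 h
    have past_tail : CongClosure r (a :: v ++ [b]) (a :: b :: v) := by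
      simpa using (ih hv).append_left_right [a] []
    have past_head : CongClosure r (a :: b :: v) (b :: a :: v) := by
      simpa using hab.append_left_right [] v
    exact past_tail.trans past_head

end CongClosure

section Small

variable {n m : ℕ} {u v w : List ℕ}

theorem SmallWord.of_infix (hw : SmallWord n w) (h : u <:+: w) : SmallWord n u := by
  rintro ⟨J, K, k, hk, hkn, hu⟩
  obtain ⟨s, t, rfl⟩ := h
  refine hw ⟨s ++ J, K ++ t, k, hk, hkn, ?_⟩
  simpa only [PCong, List.append_assoc] using hu.append_left_right s t

theorem not_smallWord_of_forall_lt {k : ℕ} (hk : 1 ≤ k) (hkn : k + 1 ≤ n)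
    (hu : ∀ a ∈ u, 1 ≤ a ∧ a < k) : ¬ SmallWord n ((k + 1) :: k :: u ++ [k + 1]) := by
  have hcomm : PCong n (u ++ [k + 1]) ((k + 1) :: u) :=
    CongClosure.append_singleton_comm fun a ha => by
      obtain ⟨ha₁, hak⟩ := hu a ha
      exact .rel [] [] (PRel.comm a (k + 1) ha₁ (by lia) (by lia) hkn (.inl (by lia)))
  refine fun hsmall => hsmall ⟨[], u, k, hk, hkn, ?_⟩
  simpa [PCong] using hcomm.append_left_right [k + 1, k] []

/-- The reduced, right-most and small words. Smallness refers to the ambient monoid `F_n`;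
membership in some `F_m` is not included, because the inductions below vary `m` and keep `n`. -/
structure IsSmallNormalWord (n : ℕ) (w : List ℕ) : Prop where
  reduced : Reduced w
  rightMost : RightMost w
  small : SmallWord n w

namespace IsSmallNormalWord

theorem of_infix (hw : IsSmallNormalWord n w) (h : u <:+: w) : IsSmallNormalWord n u :=
  ⟨List.IsChain.infix hw.reduced h, List.IsChain.infix hw.rightMost h, hw.small.of_infix h⟩

theorem head_notMem_tail (hmn : m ≤ n) (hw : IsSmallNormalWord n (m :: v))
    (hF : InF m (m :: v)) : m ∉ v := by
  induction m generalizing v with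
  | zero => exact absurd (hF 0 List.mem_cons_self).1 (by simp)
  | succ m ih =>
    intro hmem
    obtain ⟨u, t, rfl, hu⟩ := List.eq_append_cons_of_mem hmem
    have hw' : IsSmallNormalWord n ((m + 1) :: u ++ [m + 1]) := hw.of_infix ⟨[], t, by simp⟩
    have huF : InF m u := (hF.of_infix ⟨[m + 1], (m + 1) :: t, by simp⟩).of_notMem_succ hu
    cases u with
    | nil => exact absurd (hw'.rightMost.eq_succ_of_le hw'.reduced le_rfl) (by simp)
    | cons b u =>
      obtain ⟨⟨hb₁, hbm⟩, hletters⟩ := List.forall_mem_cons.1 huF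
      obtain rfl : m = b := Nat.succ_injective <|
        hw'.rightMost.eq_succ_of_le hw'.reduced (Nat.le_succ_of_le hbm)
      have hmu : m ∉ u := ih (by lia) (hw'.of_infix ⟨[m + 1], [m + 1], rfl⟩) huF
      refine not_smallWord_of_forall_lt hb₁ hmn (fun a ha => ?_) hw'.small
      exact ⟨(hletters a ha).1, (hletters a ha).2.lt_of_ne (ne_of_mem_of_not_mem ha hmu)⟩

theorem sortedGT_cons (hmn : m ≤ n) (hw : IsSmallNormalWord n (m :: v))
    (hF : InF m (m :: v)) : (m :: v).SortedGT := by
  induction v generalizing m with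
  | nil => exact (List.isChain_singleton m).sortedGT
  | cons b v ih =>
    have htail : b :: v <:+: m :: b :: v := (List.suffix_cons m _).isInfix
    obtain rfl : m = b + 1 := hw.rightMost.eq_succ_of_le hw.reduced (hF b (by simp)).2
    have hF' : InF b (b :: v) :=
      (hF.of_infix htail).of_notMem_succ (hw.head_notMem_tail hmn hF)
    have hsorted : (b :: v).SortedGT := ih (by lia) (hw.of_infix htail) hF'
    exact List.IsChain.sortedGT (.cons_cons b.lt_succ_self hsorted.isChain)

theorem length_le_choose_two (hmn : m ≤ n) (hw : IsSmallNormalWord n w) (hF : InF m w) :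
    w.length ≤ (m + 1).choose 2 := by
  induction m generalizing w with
  | zero =>
    obtain rfl : w = [] := List.eq_nil_iff_forall_not_mem.2 fun a ha =>
      absurd ((hF a ha).1.trans (hF a ha).2) (by simp)
    simp
  | succ m ih =>
    have choose_succ : (m + 1 + 1).choose 2 = (m + 1) + (m + 1).choose 2 := by
      rw [Nat.choose_succ_succ', Nat.choose_one_right]
    by_cases hm : m + 1 ∈ w
    · obtain ⟨A, B, rfl, hA⟩ := List.eq_append_cons_of_mem hm
      have hprefix : A <:+: A ++ (m + 1) :: B := (List.prefix_append A _).isInfix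
      have hsuffix : (m + 1) :: B <:+: A ++ (m + 1) :: B := (List.suffix_append A _).isInfix
      have hAlen : A.length ≤ (m + 1).choose 2 :=
        ih (by lia) (hw.of_infix hprefix) ((hF.of_infix hprefix).of_notMem_succ hA)
      have hBlen : ((m + 1) :: B).length ≤ m + 1 :=
        have hBF := hF.of_infix hsuffix
        hBF.length_le_of_nodup ((hw.of_infix hsuffix).sortedGT_cons hmn hBF).nodup
      rw [List.length_append]
      lia
    · have hlen : w.length ≤ (m + 1).choose 2 := ih (by lia) hw (hF.of_notMem_succ hm)
      lia

end IsSmallNormalWord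

end Small

theorem finite_setOf_inF_length_le (n k : ℕ) : {w | InF n w ∧ w.length ≤ k}.Finite := by
  refine ((List.finite_length_le (Set.Icc 1 n) k).image (List.map Subtype.val)).subset ?_
  rintro w ⟨hF, hlen⟩
  lift w to List (Set.Icc 1 n) using hF
  exact ⟨w, by simpa using hlen, rfl⟩

/-- For every `n ≥ 1` there are only finitely many words in `F_n` that are
simultaneously reduced, right-most and small. -/
theorem finitely_many_small_words (n : ℕ) (hn : 1 ≤ n) :
    {w : List ℕ | InF n w ∧ Reduced w ∧ RightMost w ∧ SmallWord n w}.Finite := by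
  refine (finite_setOf_inF_length_le n ((n + 1).choose 2)).subset ?_
  rintro w ⟨hF, hred, hright, hsmall⟩
  exact ⟨hF, IsSmallNormalWord.length_le_choose_two le_rfl ⟨hred, hright, hsmall⟩ hF⟩
end

section
/- Let (M,E,η) be a factorable monoid. Then the map μ : Ω_* → Ω_* defined from η is a noetherian, ℤ-compatible matching on the reduced inhomogeneous bar complex of M: (i) μ is a well-defined involution whose fixed points are exactly the essential cells, and it exchanges collapsible cells of height h with redundant cells of height h−1 (and vice versa); (ii) for every redundant cell x, the coefficient of x in d(μ(x)) equals ±1; (iii) every infinite chain x₁ ⊢ x₂ ⊢ x₃ ⊢ ⋯ of redundant cells is eventually constant. -/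
attribute [local instance] Classical.propDecidable

/-- The `j`-th entry `m_j` (counted from the right, `1`-indexed) of a bar cell
`[m_n|…|m_1]` encoded as the list `[m_n, …, m_1]`. -/
def ent {M : Type*} [Monoid M] (l : List M) (j : ℕ) : M := l.getD (l.length - j) 1

/-- The `i`-th face `d_i` of the bar differential on a cell `[m_n|…|m_1]` (encoded as
`[m_n, …, m_1]`): `d_0` deletes `m_1`, `d_n` deletes `m_n`, and for `0 < i < n`, `d_i`
replaces the pair `(m_{i+1}, m_i)` by the product `m_{i+1}·m_i`. -/
def dPart {M : Type*} [Monoid M] (i : ℕ) (l : List M) : List M :=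
  if i = 0 then l.dropLast
  else if i = l.length then l.tail
  else (l.reverse.take (i - 1) ++
        [l.reverse.getD i 1 * l.reverse.getD (i - 1) 1] ++
        l.reverse.drop (i + 1)).reverse

/-- The differential of the reduced inhomogeneous bar complex applied to a cell:
`d = Σ_i (−1)^i d_i`, where a face is set to `0` whenever it contains an entry `1`. -/
noncomputable def barDiff {M : Type*} [Monoid M] (l : List M) : List M →₀ ℤ :=
  ∑ i ∈ Finset.range (l.length + 1),
    if (1 : M) ∈ dPart i l then 0 else Finsupp.single (dPart i l) ((-1) ^ i)

/-- A cell `[m_n|…|m_1]` is essential if all entries lie in `E` and all adjacent pairs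
`(m_{i+1}, m_i)` are unstable. -/
def EssCell {M : Type*} [Monoid M] (E : Set M) (η : M → M × M) (l : List M) : Prop :=
  (∀ a ∈ l, a ∈ E) ∧ l.Chain' (fun a b => η (a * b) ≠ (a, b))

/-- The height of a cell: the largest `h` such that `[m_h|…|m_1]` is essential. -/
noncomputable def height {M : Type*} [Monoid M] (E : Set M) (η : M → M × M)
    (l : List M) : ℕ :=
  sSup {h : ℕ | h ≤ l.length ∧ EssCell E η (l.drop (l.length - h))}

/-- A non-essential cell of height `h` is collapsible if `h ≥ 1` and the pair
`(m_{h+1}, m_h)` is stable. -/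
noncomputable def Collapsible {M : Type*} [Monoid M] (E : Set M) (η : M → M × M)
    (l : List M) : Prop :=
  height E η l < l.length ∧ 1 ≤ height E η l ∧
  η (ent l (height E η l + 1) * ent l (height E η l)) =
    (ent l (height E η l + 1), ent l (height E η l))

/-- A non-essential cell which is not collapsible is redundant. -/
noncomputable def Redundant {M : Type*} [Monoid M] (E : Set M) (η : M → M × M)
    (l : List M) : Prop :=
  height E η l < l.length ∧ ¬ Collapsible E η l

/-- The matching `μ` on the bar complex of a factorable monoid: it fixes essential
cells; a collapsible cell of height `h` is sent to the cell where `(m_{h+1}, m_h)` is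
replaced by `m_{h+1}·m_h`; a redundant cell of height `h` is sent to the cell where
`m_{h+1}` is replaced by the pair `(η̄(m_{h+1}), η′(m_{h+1}))`. -/
noncomputable def matchMu {M : Type*} [Monoid M] (E : Set M) (η : M → M × M)
    (l : List M) : List M :=
  if height E η l = l.length then l
  else if Collapsible E η l then dPart (height E η l) l
  else (l.reverse.take (height E η l) ++
        [(η (l.reverse.getD (height E η l) 1)).2,
         (η (l.reverse.getD (height E η l) 1)).1] ++
        l.reverse.drop (height E η l + 1)).reverse


/-!
`IsFactorable` is used in two ways. Evaluated on triples that start with `1`, the graded relation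
gives the recognition principle: for `a ∈ E`, the pair `(m, a)` is stable if and only if
`(η′(m), a)` is. Hence splitting the lowest non-generator of a redundant cell and multiplying the
lowest stable pair of a collapsible cell are inverse to each other, which is the involution `μ`.

There is no infinite chain `x ⊢ z ⊢ ⋯` of redundant cells in which consecutive cells differ. The
norm never increases along it, so it may be assumed constant. Then each step multiplies a geodesic
pair of `μ(x)`, and `μ` splits the product again, so that `μ(z) = f_{k+1}(μ(x))` with `k` the height
of `z`. Since the stable pair at the top of `μ(x)` must not survive in `z`, either `k` is smaller
than the height of `x`, or it is larger by exactly one. Heights are bounded by the number of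
entries, so some height recurs without being exceeded in between. A shortest such return passes
through the heights `j + 1`, then possibly some that are smaller than `j`, then `j`, then `j + 1`.
The steps in the middle leave the stable pair at the entries `(j + 3, j + 2)` alone until
`f_{j+2}f_{j+1}` is applied. By the graded relation this makes the pair at `(j + 2, j + 1)` stable,
whereas it is unstable in the image under `μ` of a redundant cell of height `j + 1`.
-/

section WordLength

variable {M : Type*} [Monoid M] {E : Set M}

theorem exists_list_length_eq_wordLength (hgen : IsGenSet E) (m : M) :
    ∃ l : List M, (∀ x ∈ l, x ∈ E) ∧ l.length = wordLength E m ∧ l.prod = m :=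
  have ⟨l, hl, hm⟩ := hgen m
  Nat.sInf_mem (s := {n | ∃ l : List M, (∀ x ∈ l, x ∈ E) ∧ l.length = n ∧ l.prod = m})
    ⟨l.length, l, hl, rfl, hm⟩

theorem wordLength_prod_le {l : List M} (hl : ∀ x ∈ l, x ∈ E) :
    wordLength E l.prod ≤ l.length :=
  Nat.sInf_le ⟨l, hl, rfl, rfl⟩

theorem wordLength_one : wordLength E (1 : M) = 0 :=
  Nat.le_zero.1 (wordLength_prod_le (l := []) (by simp))

theorem wordLength_le_one {a : M} (ha : a ∈ E) : wordLength E a ≤ 1 := by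
  simpa using wordLength_prod_le (l := [a]) (by simpa using ha)

theorem wordLength_pos (hgen : IsGenSet E) {m : M} (hm : m ≠ 1) : 0 < wordLength E m := by
  obtain ⟨l, -, hlen, rfl⟩ := exists_list_length_eq_wordLength hgen m
  rw [← hlen, List.length_pos_iff]
  rintro rfl
  exact hm List.prod_nil

theorem wordLength_mul_le (hgen : IsGenSet E) (a b : M) :
    wordLength E (a * b) ≤ wordLength E a + wordLength E b := by
  obtain ⟨l, hl, hlen, rfl⟩ := exists_list_length_eq_wordLength hgen a
  obtain ⟨l', hl', hlen', rfl⟩ := exists_list_length_eq_wordLength hgen b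
  rw [← hlen, ← hlen', ← List.length_append, ← List.prod_append]
  exact wordLength_prod_le (List.forall_mem_append.2 ⟨hl, hl'⟩)

theorem Geodesic.mul_notMem (hgen : IsGenSet E) {a b : M} (h : Geodesic E a b) (ha : a ≠ 1)
    (hb : b ≠ 1) : a * b ∉ E := fun hab => by
  have hN : wordLength E a + wordLength E b ≤ 1 := h ▸ wordLength_le_one hab
  have hNa := wordLength_pos hgen ha
  have hNb := wordLength_pos hgen hb
  omega

theorem Geodesic.mul_ne_one (hgen : IsGenSet E) {a b : M} (h : Geodesic E a b) (ha : a ≠ 1) :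
    a * b ≠ 1 := fun hab => by
  have hN : wordLength E (1 : M) = wordLength E a + wordLength E b := hab ▸ h
  have hNa := wordLength_pos hgen ha
  rw [wordLength_one] at hN
  omega

end WordLength

section Factorable

variable {M : Type*} [Monoid M] {E : Set M} {η : M → M × M}

/-- The pair `(a, b)` is stable: `η` splits the product `a * b` back into `a` and `b`. -/
def StablePair (η : M → M × M) (a b : M) : Prop := η (a * b) = (a, b)

theorem IsFactorizationMap.stablePair (hη : IsFactorizationMap E η) (m : M) :
    StablePair η (η m).1 (η m).2 :=
  congrArg η (hη.1 m)

theorem IsFactorizationMap.geodesic (hη : IsFactorizationMap E η) {a b : M}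
    (h : StablePair η a b) : Geodesic E a b := by
  have hN := hη.2.1 (a * b)
  rwa [h] at hN

theorem IsFactorizationMap.fst_ne_one (hη : IsFactorizationMap E η) {m : M} (hm : m ≠ 1)
    (hE : m ∉ E) : (η m).1 ≠ 1 := fun h => by
  have hsnd : (η m).2 = m := by simpa only [h, one_mul] using hη.1 m
  exact hE (hsnd ▸ hη.2.2.1 m hm)

theorem IsFactorable.eq_of_tnorm_le (hfac : IsFactorable E η) {p : M × M × M}
    (hp : tnorm E p ≤ tnorm E (f2 η (f1 η (f2 η p)))) :
    f1 η (f2 η (f1 η (f2 η p))) = f2 η (f1 η (f2 η p)) ∧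
      f2 η (f1 η (f2 η p)) = f2 η (f1 η (f2 η (f1 η p))) :=
  (hfac.2 p).resolve_right fun h => h.2.1.not_ge hp

theorem f1_of_stablePair {a b c : M} (h : StablePair η b c) : f1 η (a, b, c) = (a, b, c) :=
  congrArg (Prod.mk a) h

theorem f2_of_stablePair {a b c : M} (h : StablePair η a b) : f2 η (a, b, c) = (a, b, c) := by
  rw [StablePair] at h
  simp only [f2, h]

theorem f2_one (m a : M) : f2 η (1, m, a) = ((η m).1, (η m).2, a) := by
  simp only [f2, one_mul]

theorem f2_f1_f2_one (hη : IsFactorizationMap E η) {m a : M} (h : StablePair η (η m).2 a) :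
    f2 η (f1 η (f2 η (1, m, a))) = ((η m).1, (η m).2, a) := by
  rw [f2_one, f1_of_stablePair h, f2_of_stablePair (hη.stablePair m)]

theorem IsFactorable.stablePair_snd (hfac : IsFactorable E η) {m a : M}
    (h : StablePair η m a) : StablePair η (η m).2 a := by
  have hη := hfac.1
  have hff : f1 η (f2 η (1, 1, m * a)) = (1, m, a) := by
    rw [f2_one, hη.2.2.2, f1, one_mul, h]
  have hN : tnorm E (1, 1, m * a) ≤ tnorm E (f2 η (f1 η (f2 η (1, 1, m * a)))) := by
    have hma : wordLength E (m * a) = _ := hη.geodesic h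
    rw [hff, f2_one]
    simp only [tnorm, wordLength_one, hma, hη.2.1 m, zero_add, le_refl]
  have heq := (hfac.eq_of_tnorm_le hN).1
  rw [hff, f2_one] at heq
  exact congrArg Prod.snd heq

theorem IsFactorable.stablePair_of_snd (hfac : IsFactorable E η) {m a : M}
    (h : StablePair η (η m).2 a) : StablePair η m a := by
  have hη := hfac.1
  have hN : tnorm E (1, m, a) ≤ tnorm E (f2 η (f1 η (f2 η (1, m, a)))) := by
    simp only [f2_f1_f2_one hη h, tnorm, wordLength_one, hη.2.1 m, zero_add, le_refl]
  have hf₁ : f1 η (1, m, a) = (1, (η (m * a)).1, (η (m * a)).2) := rfl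
  have heq := (hfac.eq_of_tnorm_le hN).2
  rw [hf₁, f2_f1_f2_one hη h, f2_f1_f2_one hη (hfac.stablePair_snd (hη.stablePair _))] at heq
  simp only [Prod.mk.injEq] at heq
  obtain ⟨hfst, hsnd, ha⟩ := heq
  refine Prod.ext ?_ ha.symm
  calc (η (m * a)).1 = (η (η (m * a)).1).1 * (η (η (m * a)).1).2 := (hη.1 _).symm
    _ = (η m).1 * (η m).2 := by rw [hfst, hsnd]
    _ = m := hη.1 m

theorem IsFactorable.recognitionPrinciple (hfac : IsFactorable E η) :
    RecognitionPrinciple E η :=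
  fun _ _ _ => ⟨hfac.stablePair_snd, hfac.stablePair_of_snd⟩

/- Under the hypotheses `f₂`, then `f₁`, then `f₂` again preserve the norm of `(a, b, c)`, so that
`f₁f₂f₁f₂ = f₂f₁f₂` holds there. -/
theorem IsFactorable.stablePair_right (hfac : IsFactorable E η) {a b c : M}
    (hab : StablePair η a b) (hbc : Geodesic E b c) (habc : Geodesic E a (η (b * c)).1) :
    StablePair η (η (a * (η (b * c)).1)).2 (η (b * c)).2 := by
  have hN : tnorm E (a, b, c) ≤ tnorm E (f2 η (f1 η (f2 η (a, b, c)))) := by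
    have h₁ := hfac.1.2.1 (b * c)
    have h₂ := hfac.1.2.1 (a * (η (b * c)).1)
    rw [f2_of_stablePair hab]
    simp only [f1, f2, tnorm]
    unfold Geodesic at hbc habc
    omega
  have heq := (hfac.eq_of_tnorm_le hN).1
  rw [f2_of_stablePair hab] at heq
  exact congrArg Prod.snd heq

end Factorable

section Faces

variable {M : Type*} [Monoid M] {E : Set M} {η : M → M × M}

theorem dPart_append_cons_cons (w : List M) (b a : M) (e : List M) :
    dPart (e.length + 1) (w ++ b :: a :: e) = w ++ b * a :: e := by
  have hlast : e.length + 1 ≠ (w ++ b :: a :: e).length := by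
    rw [List.length_append, List.length_cons, List.length_cons]
    omega
  rw [dPart, if_neg (Nat.succ_ne_zero _), if_neg hlast]
  simp [List.drop_append, add_assoc]

theorem ent_append_cons (w : List M) (m : M) (e : List M) :
    ent (w ++ m :: e) (e.length + 1) = m := by
  simp [ent]

theorem ent_append_cons_cons (w : List M) (b a : M) (e : List M) :
    ent (w ++ b :: a :: e) (e.length + 1) = a := by
  simpa using ent_append_cons (w ++ [b]) a e

theorem exists_eq_append_cons_cons {α : Type*} {l : List α} {i : ℕ} (hi : i + 1 < l.length) :
    ∃ w b a e, l = w ++ b :: a :: e ∧ e.length = i := by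
  obtain ⟨n, hn⟩ : ∃ n, l.length = n + 2 + i := ⟨l.length - (i + 2), by omega⟩
  refine ⟨l.take n, l[n], l[n + 1], l.drop (n + 2), ?_, by rw [List.length_drop]; omega⟩
  rw [List.cons_getElem_drop_succ, List.cons_getElem_drop_succ, List.take_append_drop]

theorem dPart_cases {l : List M} {i : ℕ} (hl : l ≠ []) (hi : i ≤ l.length) :
    (∃ a, l = dPart i l ++ [a] ∨ l = a :: dPart i l) ∨
      ∃ w b a e, l = w ++ b :: a :: e ∧ i = e.length + 1 ∧ dPart i l = w ++ b * a :: e := by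
  rcases i with _ | i
  · exact Or.inl ⟨l.getLast hl, Or.inl (List.dropLast_append_getLast hl).symm⟩
  rcases hi.eq_or_lt with hi | hi
  · refine Or.inl ⟨l.head hl, Or.inr ?_⟩
    rw [dPart, if_neg (by omega), if_pos hi, List.cons_head_tail]
  · obtain ⟨w, b, a, e, rfl, rfl⟩ := exists_eq_append_cons_cons hi
    exact Or.inr ⟨w, b, a, e, rfl, rfl, dPart_append_cons_cons w b a e⟩

theorem exists_dPart_eq_of_barDiff_ne_zero {l z : List M} (h : barDiff l z ≠ 0) :
    ∃ i ≤ l.length, dPart i l = z := by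
  rw [barDiff, Finsupp.finsetSum_apply] at h
  obtain ⟨i, hi, hne⟩ := Finset.exists_ne_zero_of_sum_ne_zero h
  refine ⟨i, Finset.mem_range_succ_iff.1 hi, ?_⟩
  by_contra hz
  split_ifs at hne
  exacts [hne rfl, hne (Finsupp.single_eq_of_ne (Ne.symm hz))]

theorem length_dPart {l : List M} {i : ℕ} (hl : l ≠ []) (hi : i ≤ l.length) :
    (dPart i l).length + 1 = l.length := by
  rcases dPart_cases hl hi with ⟨a, h | h⟩ | ⟨w, b, a, e, rfl, -, h⟩
  · simpa using congrArg List.length h.symm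
  · simpa using congrArg List.length h.symm
  · simp [h, add_assoc]

/-- The norm of a cell: the sum of the word lengths of its entries. -/
noncomputable def cellNorm (E : Set M) (l : List M) : ℕ := (l.map (wordLength E)).sum

theorem cellNorm_append (l l' : List M) :
    cellNorm E (l ++ l') = cellNorm E l + cellNorm E l' := by
  simp only [cellNorm, List.map_append, List.sum_append]

theorem cellNorm_cons (a : M) (l : List M) :
    cellNorm E (a :: l) = wordLength E a + cellNorm E l := by
  simp only [cellNorm, List.map_cons, List.sum_cons]

theorem cellNorm_dPart_le (hgen : IsGenSet E) {l : List M} {i : ℕ} (hl : l ≠ [])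
    (hi : i ≤ l.length) : cellNorm E (dPart i l) ≤ cellNorm E l := by
  rcases dPart_cases hl hi with ⟨a, h | h⟩ | ⟨w, b, a, e, rfl, -, h⟩
  · exact Nat.le.intro ((cellNorm_append _ _).symm.trans (congrArg _ h.symm))
  · rw [congrArg (cellNorm E) h, cellNorm_cons]
    exact Nat.le_add_left _ _
  · have hba := wordLength_mul_le hgen b a
    simp only [h, cellNorm_append, cellNorm_cons]
    omega

theorem exists_geodesic_of_cellNorm_dPart_eq (hgen : IsGenSet E) {l : List M} {i : ℕ}
    (hone : (1 : M) ∉ l) (hl : l ≠ []) (hi : i ≤ l.length)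
    (hN : cellNorm E (dPart i l) = cellNorm E l) :
    ∃ w b a e, l = w ++ b :: a :: e ∧ i = e.length + 1 ∧ dPart i l = w ++ b * a :: e ∧
      Geodesic E b a := by
  rcases dPart_cases hl hi with ⟨a, h⟩ | ⟨w, b, a, e, rfl, hie, h⟩
  · have ha : a ∈ l := by rcases h with h | h <;> rw [h] <;> simp
    have hpos := wordLength_pos hgen (ne_of_mem_of_not_mem ha hone)
    have hla : cellNorm E l = cellNorm E (dPart i l) + wordLength E a := by
      rcases h with h | h
      · simpa [cellNorm] using congrArg (cellNorm E) h
      · rw [congrArg (cellNorm E) h, cellNorm_cons, add_comm]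
    omega
  · refine ⟨w, b, a, e, rfl, hie, h, ?_⟩
    simp only [h, cellNorm_append, cellNorm_cons] at hN
    unfold Geodesic
    omega

end Faces

section Cells

variable {M : Type*} [Monoid M] {E : Set M} {η : M → M × M}

theorem essCell_nil : EssCell E η [] :=
  ⟨by simp, List.isChain_nil⟩

theorem essCell_cons {a : M} {e : List M} :
    EssCell E η (a :: e) ↔ a ∈ E ∧ (∀ b ∈ e.head?, ¬ StablePair η a b) ∧ EssCell E η e := by
  have hchain : (a :: e).IsChain (fun a b => η (a * b) ≠ (a, b)) ↔ _ := List.isChain_cons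
  change (_ ∧ (a :: e).IsChain _) ↔ _ ∧ _ ∧ _ ∧ e.IsChain _
  rw [hchain, List.forall_mem_cons]
  tauto

theorem EssCell.of_suffix {e l : List M} (hl : EssCell E η l) (h : e <:+ l) :
    EssCell E η e :=
  ⟨fun a ha => hl.1 a (h.subset ha), List.IsChain.suffix hl.2 h⟩

theorem height_eq_length {l : List M} (hl : EssCell E η l) : height E η l = l.length :=
  IsGreatest.csSup_eq ⟨⟨le_rfl, by simpa using hl⟩, fun _ h => h.1⟩

theorem height_append_cons (w : List M) {m : M} {e : List M} (he : EssCell E η e)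
    (hme : ¬ EssCell E η (m :: e)) : height E η (w ++ m :: e) = e.length := by
  have hlen : e.length < (w ++ m :: e).length := by
    rw [List.length_append, List.length_cons]
    omega
  refine IsGreatest.csSup_eq ⟨⟨hlen.le, ?_⟩, fun h ⟨_, hess⟩ => ?_⟩
  · exact he.of_suffix (List.suffix_of_suffix_length_le (List.drop_suffix _ _)
      ((List.suffix_cons m e).trans (List.suffix_append w _)) (by rw [List.length_drop]; omega))
  · by_contra! hlt
    refine hme (hess.of_suffix ?_)
    refine List.suffix_of_suffix_length_le (List.suffix_append w _) (List.drop_suffix _ _) ?_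
    rw [List.length_drop, List.length_cons]
    omega

/-- The pair `(b, a)` and the tail `e` are such that every cell `[…|b|a|e]` is collapsible of
height `e.length + 1`. -/
structure CollapsibleAt (E : Set M) (η : M → M × M) (b a : M) (e : List M) : Prop where
  essCell : EssCell E η (a :: e)
  stablePair : StablePair η b a

/-- The entry `m` and the tail `e` are such that every cell `[…|m|e]` is redundant of height
`e.length`. -/
structure RedundantAt (E : Set M) (η : M → M × M) (m : M) (e : List M) : Prop where
  essCell : EssCell E η e
  notMem : m ∉ E
  not_stablePair : ∀ a ∈ e.head?, ¬ StablePair η m a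

variable {w e : List M} {m b a : M}

theorem CollapsibleAt.height_eq (h : CollapsibleAt E η b a e) :
    height E η (w ++ b :: a :: e) = e.length + 1 :=
  height_append_cons w h.essCell fun hess => (essCell_cons.1 hess).2.1 a rfl h.stablePair

theorem RedundantAt.height_eq (h : RedundantAt E η m e) :
    height E η (w ++ m :: e) = e.length :=
  height_append_cons w h.essCell fun hess => h.notMem (essCell_cons.1 hess).1

theorem CollapsibleAt.collapsible (h : CollapsibleAt E η b a e) :
    Collapsible E η (w ++ b :: a :: e) := by
  rw [Collapsible, h.height_eq]
  refine ⟨by simp only [List.length_append, List.length_cons]; omega, by omega, ?_⟩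
  have hb : ent (w ++ b :: a :: e) (e.length + 1 + 1) = b := ent_append_cons w b (a :: e)
  rw [ent_append_cons_cons, hb]
  exact h.stablePair

theorem RedundantAt.redundant (h : RedundantAt E η m e) : Redundant E η (w ++ m :: e) := by
  rw [Redundant, Collapsible, h.height_eq]
  refine ⟨by simp only [List.length_append, List.length_cons]; omega, fun ⟨_, hpos, hs⟩ => ?_⟩
  obtain ⟨a, e, rfl⟩ := List.exists_cons_of_length_pos hpos
  rw [ent_append_cons, List.length_cons, ent_append_cons_cons] at hs
  exact h.not_stablePair a rfl hs

theorem essCell_or_collapsibleAt_or_redundantAt (l : List M) :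
    EssCell E η l ∨ (∃ w b a e, l = w ++ b :: a :: e ∧ CollapsibleAt E η b a e) ∨
      ∃ w m e, l = w ++ m :: e ∧ RedundantAt E η m e := by
  induction l with
  | nil => exact Or.inl essCell_nil
  | cons m l ih =>
    rcases ih with hl | ⟨w, b, a, e, rfl, h⟩ | ⟨w, m', e, rfl, h⟩
    · by_cases hs : ∃ a ∈ l.head?, StablePair η m a
      · obtain ⟨a, ha, hs⟩ := hs
        obtain ⟨e, rfl⟩ := List.head?_eq_some_iff.1 ha
        exact Or.inr (Or.inl ⟨[], m, a, e, rfl, hl, hs⟩)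
      push Not at hs
      by_cases hm : m ∈ E
      · exact Or.inl (essCell_cons.2 ⟨hm, hs, hl⟩)
      · exact Or.inr (Or.inr ⟨[], m, l, rfl, hl, hm, hs⟩)
    · exact Or.inr (Or.inl ⟨m :: w, b, a, e, rfl, h⟩)
    · exact Or.inr (Or.inr ⟨m :: w, m', e, rfl, h⟩)

theorem Collapsible.exists_collapsibleAt {l : List M} (hl : Collapsible E η l) :
    ∃ w b a e, l = w ++ b :: a :: e ∧ CollapsibleAt E η b a e := by
  rcases essCell_or_collapsibleAt_or_redundantAt (E := E) (η := η) l with h | h | h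
  · exact absurd (height_eq_length h) hl.1.ne
  · exact h
  · obtain ⟨w, m, e, rfl, h⟩ := h
    exact absurd hl h.redundant.2

theorem Redundant.exists_redundantAt {l : List M} (hl : Redundant E η l) :
    ∃ w m e, l = w ++ m :: e ∧ RedundantAt E η m e := by
  rcases essCell_or_collapsibleAt_or_redundantAt (E := E) (η := η) l with h | h | h
  · exact absurd (height_eq_length h) hl.1.ne
  · obtain ⟨w, b, a, e, rfl, h⟩ := h
    exact absurd h.collapsible hl.2
  · exact h

theorem Redundant.redundantAt_of_notMem (hl : Redundant E η (w ++ m :: e)) (he : EssCell E η e)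
    (hm : m ∉ E) : RedundantAt E η m e where
  essCell := he
  notMem := hm
  not_stablePair a ha hs := by
    obtain ⟨e, rfl⟩ := List.head?_eq_some_iff.1 ha
    exact hl.2 (CollapsibleAt.collapsible ⟨he, hs⟩)

theorem EssCell.matchMu_eq {l : List M} (hl : EssCell E η l) : matchMu E η l = l :=
  if_pos (height_eq_length hl)

theorem CollapsibleAt.matchMu_eq (h : CollapsibleAt E η b a e) :
    matchMu E η (w ++ b :: a :: e) = w ++ b * a :: e := by
  have hc := h.collapsible (w := w)
  rw [matchMu, if_neg hc.1.ne, if_pos hc, h.height_eq, dPart_append_cons_cons]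

theorem RedundantAt.matchMu_eq (h : RedundantAt E η m e) :
    matchMu E η (w ++ m :: e) = w ++ (η m).1 :: (η m).2 :: e := by
  have hr := h.redundant (w := w)
  rw [matchMu, if_neg hr.1.ne, if_neg hr.2, h.height_eq]
  simp [List.drop_append]

end Cells

section Matching

variable {M : Type*} [Monoid M] {E : Set M} {η : M → M × M}

theorem RedundantAt.collapsibleAt (hη : IsFactorizationMap E η) (hrec : RecognitionPrinciple E η)
    {m : M} {e : List M} (h : RedundantAt E η m e) (hm : m ≠ 1) :
    CollapsibleAt E η (η m).1 (η m).2 e where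
  essCell := essCell_cons.2 ⟨hη.2.2.1 m hm, fun a ha hs => h.not_stablePair a ha
    ((hrec m a (h.essCell.1 a (List.mem_of_head? ha))).2 hs), h.essCell⟩
  stablePair := hη.stablePair m

theorem CollapsibleAt.redundantAt (hgen : IsGenSet E) (hη : IsFactorizationMap E η)
    (hrec : RecognitionPrinciple E η) {b a : M} {e : List M} (h : CollapsibleAt E η b a e)
    (hb : b ≠ 1) (ha : a ≠ 1) : RedundantAt E η (b * a) e := by
  obtain ⟨-, hunstable, he⟩ := essCell_cons.1 h.essCell
  refine ⟨he, (hη.geodesic h.stablePair).mul_notMem hgen hb ha, fun c hc hs => ?_⟩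
  have hsnd := (hrec (b * a) c (he.1 c (List.mem_of_head? hc))).1 hs
  rw [h.stablePair] at hsnd
  exact hunstable c hc hsnd

theorem matchMu_eq_self_iff {l : List M} : matchMu E η l = l ↔ EssCell E η l := by
  refine ⟨fun hμ => ?_, EssCell.matchMu_eq⟩
  rcases essCell_or_collapsibleAt_or_redundantAt (E := E) (η := η) l with
    hl | ⟨w, b, a, e, rfl, h⟩ | ⟨w, m, e, rfl, h⟩
  · exact hl
  · simpa [h.matchMu_eq] using congrArg List.length hμ
  · simpa [h.matchMu_eq] using congrArg List.length hμ

theorem one_notMem_matchMu (h1 : (1 : M) ∉ E) (hgen : IsGenSet E)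
    (hη : IsFactorizationMap E η) {l : List M} (hone : (1 : M) ∉ l) : (1 : M) ∉ matchMu E η l := by
  rcases essCell_or_collapsibleAt_or_redundantAt (E := E) (η := η) l with
    hl | ⟨w, b, a, e, rfl, h⟩ | ⟨w, m, e, rfl, h⟩
  · rwa [hl.matchMu_eq]
  · simp only [List.mem_append, List.mem_cons, not_or] at hone
    have hba := (hη.geodesic h.stablePair).mul_ne_one hgen (Ne.symm hone.2.1)
    simpa [h.matchMu_eq, hone, not_or] using hba.symm
  · simp only [List.mem_append, List.mem_cons, not_or] at hone
    have hm : m ≠ 1 := Ne.symm hone.2.1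
    have hfst := hη.fst_ne_one hm h.notMem
    have hsnd := ne_of_mem_of_not_mem (hη.2.2.1 m hm) h1
    simpa [h.matchMu_eq, hone, not_or] using ⟨hfst.symm, hsnd.symm⟩

theorem matchMu_matchMu (hgen : IsGenSet E) (hη : IsFactorizationMap E η)
    (hrec : RecognitionPrinciple E η) {l : List M} (hone : (1 : M) ∉ l) :
    matchMu E η (matchMu E η l) = l := by
  rcases essCell_or_collapsibleAt_or_redundantAt (E := E) (η := η) l with
    hl | ⟨w, b, a, e, rfl, h⟩ | ⟨w, m, e, rfl, h⟩
  · rw [hl.matchMu_eq, hl.matchMu_eq]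
  · simp only [List.mem_append, List.mem_cons, not_or] at hone
    have hr := h.redundantAt hgen hη hrec (Ne.symm hone.2.1) (Ne.symm hone.2.2.1)
    rw [h.matchMu_eq, hr.matchMu_eq, h.stablePair]
  · simp only [List.mem_append, List.mem_cons, not_or] at hone
    have hc := h.collapsibleAt hη hrec (Ne.symm hone.2.1)
    rw [h.matchMu_eq, hc.matchMu_eq, hη.1]

theorem Collapsible.redundant_matchMu (hgen : IsGenSet E) (hη : IsFactorizationMap E η)
    (hrec : RecognitionPrinciple E η) {l : List M} (hl : Collapsible E η l)
    (hone : (1 : M) ∉ l) :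
    Redundant E η (matchMu E η l) ∧ (matchMu E η l).length + 1 = l.length ∧
      height E η (matchMu E η l) + 1 = height E η l := by
  obtain ⟨w, b, a, e, rfl, h⟩ := hl.exists_collapsibleAt
  simp only [List.mem_append, List.mem_cons, not_or] at hone
  have hr := h.redundantAt hgen hη hrec (Ne.symm hone.2.1) (Ne.symm hone.2.2.1)
  rw [h.matchMu_eq, hr.height_eq, h.height_eq]
  exact ⟨hr.redundant, by simp [add_assoc], rfl⟩

theorem Redundant.collapsible_matchMu (hη : IsFactorizationMap E η)
    (hrec : RecognitionPrinciple E η) {l : List M} (hl : Redundant E η l) (hone : (1 : M) ∉ l) :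
    Collapsible E η (matchMu E η l) ∧ (matchMu E η l).length = l.length + 1 ∧
      height E η (matchMu E η l) = height E η l + 1 := by
  obtain ⟨w, m, e, rfl, h⟩ := hl.exists_redundantAt
  simp only [List.mem_append, List.mem_cons, not_or] at hone
  have hc := h.collapsibleAt hη hrec (Ne.symm hone.2.1)
  rw [h.matchMu_eq, hc.height_eq, h.height_eq]
  exact ⟨hc.collapsible, by simp [add_assoc], rfl⟩

theorem Redundant.cellNorm_matchMu (hη : IsFactorizationMap E η) {l : List M}
    (hl : Redundant E η l) : cellNorm E (matchMu E η l) = cellNorm E l := by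
  obtain ⟨w, m, e, rfl, h⟩ := hl.exists_redundantAt
  simp only [h.matchMu_eq, cellNorm_append, cellNorm_cons, hη.2.1 m, add_assoc]

theorem Redundant.dPart_matchMu (hη : IsFactorizationMap E η) {l : List M}
    (hl : Redundant E η l) : dPart (height E η l + 1) (matchMu E η l) = l := by
  obtain ⟨w, m, e, rfl, h⟩ := hl.exists_redundantAt
  rw [h.matchMu_eq, h.height_eq, dPart_append_cons_cons, hη.1]

/- A face above the height of `y` would leave the lowest stable pair of `y` in place, hence be
collapsible. -/
theorem Collapsible.exists_redundantAt_of_dPart (hgen : IsGenSet E) {y : List M} {i : ℕ}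
    (hy : Collapsible E η y) (hone : (1 : M) ∉ y) (hi : i ≤ y.length)
    (hz : Redundant E η (dPart i y)) (hN : cellNorm E (dPart i y) = cellNorm E y) :
    ∃ w b a e, y = w ++ b :: a :: e ∧ i = e.length + 1 ∧ dPart i y = w ++ b * a :: e ∧
      Geodesic E b a ∧ RedundantAt E η (b * a) e ∧ e.length ≤ height E η y := by
  obtain ⟨w₀, b₀, a₀, e₀, hy₀, hc⟩ := hy.exists_collapsibleAt
  obtain ⟨w, b, a, e, rfl, rfl, hd, hgeo⟩ :=
    exists_geodesic_of_cellNorm_dPart_eq hgen hone (by rintro rfl; simp at hy₀) hi hN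
  refine ⟨w, b, a, e, rfl, rfl, hd, hgeo, ?_⟩
  simp only [List.mem_append, List.mem_cons, not_or] at hone
  have he : e <:+ w ++ b :: a :: e := ⟨w ++ [b, a], by simp⟩
  have he₀ : b₀ :: a₀ :: e₀ <:+ w ++ b :: a :: e := ⟨w₀, hy₀.symm⟩
  have hsuffix : e <:+ a₀ :: e₀ := by
    by_contra hlow
    have hhigh : b₀ :: a₀ :: e₀ <:+ w ++ b * a :: e := by
      refine List.IsSuffix.trans ?_ ((List.suffix_cons _ e).trans (List.suffix_append w _))
      rcases List.suffix_or_suffix_of_suffix he he₀ with h | h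
      · rcases List.suffix_cons_iff.1 h with rfl | h
        exacts [List.suffix_rfl, absurd h hlow]
      · exact h
    obtain ⟨u, hu⟩ := hhigh
    rw [hd, ← hu] at hz
    exact hz.2 hc.collapsible
  have hess := hc.essCell.of_suffix hsuffix
  have hmem : b * a ∉ E := hgeo.mul_notMem hgen (Ne.symm hone.2.1) (Ne.symm hone.2.2.1)
  rw [hd] at hz
  refine ⟨hz.redundantAt_of_notMem hess hmem, ?_⟩
  rw [hy₀, hc.height_eq]
  exact hsuffix.length_le

theorem Redundant.barDiff_matchMu (h1 : (1 : M) ∉ E) (hgen : IsGenSet E)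
    (hη : IsFactorizationMap E η) (hrec : RecognitionPrinciple E η) {l : List M}
    (hl : Redundant E η l) (hone : (1 : M) ∉ l) :
    barDiff (matchMu E η l) l = (-1) ^ (height E η l + 1) := by
  obtain ⟨hc, hlen, -⟩ := hl.collapsible_matchMu hη hrec hone
  have hself := hl.dPart_matchMu hη
  have hunique : ∀ i ≤ (matchMu E η l).length, dPart i (matchMu E η l) = l →
      i = height E η l + 1 := fun i hi hd => by
    obtain ⟨w, b, a, e, -, rfl, hdw, -, hr, -⟩ := hc.exists_redundantAt_of_dPart hgen
      (one_notMem_matchMu h1 hgen hη hone) hi (hd.symm ▸ hl)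
      (by rw [hd, hl.cellNorm_matchMu hη])
    rw [← hd, hdw, hr.height_eq]
  rw [barDiff, Finsupp.finsetSum_apply, Finset.sum_eq_single (height E η l + 1)]
  · rw [hself, if_neg hone, Finsupp.single_eq_same]
  · intro i hi hne
    split_ifs
    · rfl
    · exact Finsupp.single_eq_of_ne fun hd =>
        hne (hunique i (Finset.mem_range_succ_iff.1 hi) hd.symm)
  · have := hl.1
    exact fun h => absurd (Finset.mem_range.2 (by omega)) h

end Matching

section Dips

variable {k : ℕ → ℕ}

theorem exists_frequently_eq_eventually_le (hb : BddAbove (Set.range k)) :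
    ∃ J, (∃ᶠ t in Filter.atTop, k t = J) ∧ ∀ᶠ t in Filter.atTop, k t ≤ J := by
  have hex : ∃ J, ∀ᶠ t in Filter.atTop, k t ≤ J := by
    obtain ⟨J, hJ⟩ := hb
    exact ⟨J, Filter.Eventually.of_forall fun t => hJ ⟨t, rfl⟩⟩
  refine ⟨Nat.find hex, fun hne => ?_, Nat.find_spec hex⟩
  have hlt : ∀ᶠ t in Filter.atTop, k t < Nat.find hex :=
    hne.mp ((Nat.find_spec hex).mono fun _ hle hne => lt_of_le_of_ne hle hne)
  obtain ⟨t, ht⟩ := hlt.exists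
  exact Nat.find_min hex (m := Nat.find hex - 1) (by omega) (hlt.mono fun _ h => by omega)

/-- `k` returns at time `t` to its value at time `s`, without exceeding it in between. -/
structure IsExcursion (k : ℕ → ℕ) (s t : ℕ) : Prop where
  lt : s < t
  eq : k t = k s
  le : ∀ r, s < r → r < t → k r ≤ k s

theorem exists_isExcursion (hb : BddAbove (Set.range k)) : ∃ s t, IsExcursion k s t := by
  obtain ⟨J, hfreq, hle⟩ := exists_frequently_eq_eventually_le hb
  obtain ⟨N, hN⟩ := Filter.eventually_atTop.1 hle
  obtain ⟨s, hs, hks⟩ := Filter.frequently_atTop.1 hfreq N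
  obtain ⟨t, ht, hkt⟩ := Filter.frequently_atTop.1 hfreq (s + 1)
  exact ⟨s, t, ht, hkt.trans hks.symm, fun r hr _ => hks ▸ hN r (hs.trans hr.le)⟩

theorem exists_isExcursion_minimal (hb : BddAbove (Set.range k)) :
    ∃ s t, IsExcursion k s t ∧ ∀ u v, IsExcursion k u v → t - s ≤ v - u := by
  obtain ⟨⟨s, t⟩, hst, hmin⟩ := WellFounded.has_min (measure fun p : ℕ × ℕ => p.2 - p.1).wf
    {p | IsExcursion k p.1 p.2} (have ⟨s, t, h⟩ := exists_isExcursion hb; ⟨(s, t), h⟩)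
  exact ⟨s, t, hst, fun u v h => not_lt.1 (hmin (u, v) h)⟩

/-- Starting from `j + 1` at time `s`, `k` stays below `j` until it climbs through `j` at time `q`
back to `j + 1` at time `q + 1`. -/
structure IsDip (k : ℕ → ℕ) (j s q : ℕ) : Prop where
  lt : s < q
  start : k s = j + 1
  bottom : ∀ r, s < r → r < q → k r < j
  climb : k q = j
  finish : k (q + 1) = j + 1

theorem exists_isDip (hb : BddAbove (Set.range k))
    (hstep : ∀ t, k (t + 1) < k t ∨ k (t + 1) = k t + 1) : ∃ j s q, IsDip k j s q := by
  obtain ⟨s, t, hst, hmin⟩ := exists_isExcursion_minimal hb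
  have hlt : ∀ r, s < r → r < t → k r < k s := fun r hsr hrt =>
    lt_of_le_of_ne (hst.le r hsr hrt) fun heq => by
      have := hmin s r ⟨hsr, heq, fun r' h h' => hst.le r' h (h'.trans hrt)⟩
      omega
  obtain ⟨q, rfl⟩ : ∃ q, t = q + 1 := Nat.exists_eq_add_one.2 (Nat.zero_lt_of_lt hst.lt)
  have heq := hst.eq
  have hsq : s < q := by
    refine lt_of_le_of_ne (Nat.le_of_lt_succ hst.lt) ?_
    rintro rfl
    have := hstep s
    omega
  have hkq : k s = k q + 1 := by
    have := hlt q hsq q.lt_succ_self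
    have := hstep q
    omega
  refine ⟨k q, s, q, hsq, hkq, fun r hsr hrq => ?_, rfl, heq.trans hkq⟩
  by_contra! hge
  have hle : ∀ r', s < r' → r' < q → k r' ≤ k q := fun r' h h' => by
    have := hlt r' h (h'.trans q.lt_succ_self)
    omega
  have := hmin r q ⟨hrq, hge.antisymm (hle r hsr hrq), fun r' h h' =>
    (hle r' (hsr.trans h) h').trans hge⟩
  omega

end Dips

section Entries

variable {M : Type*} [Monoid M] {E : Set M} {η : M → M × M}

/-- The entries `m_1, m_2, …` of a cell `[m_n|…|m_1]`, numbered from `0` and continued by `1`. -/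
def entry (l : List M) (i : ℕ) : M := l.reverse.getD i 1

theorem entry_append_cons (w : List M) (m : M) (e : List M) :
    entry (w ++ m :: e) e.length = m := by
  simp [entry]

theorem entry_append_cons_cons (w : List M) (b a : M) (e : List M) :
    entry (w ++ b :: a :: e) e.length = a := by
  simpa using entry_append_cons (w ++ [b]) a e

theorem entry_append_cons_cons_succ (w : List M) (b a : M) (e : List M) :
    entry (w ++ b :: a :: e) (e.length + 1) = b :=
  entry_append_cons w b (a :: e)

/-- Applying `η` to the product of the entries `k + 1` and `k`: the map `f_{k+1}` of the theory of
factorable monoids, acting on sequences. -/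
def factorAt (η : M → M × M) (k : ℕ) (y : ℕ → M) : ℕ → M := fun i =>
  if i = k then (η (y (k + 1) * y k)).2
  else if i = k + 1 then (η (y (k + 1) * y k)).1
  else y i

theorem factorAt_self (k : ℕ) (y : ℕ → M) :
    factorAt η k y k = (η (y (k + 1) * y k)).2 := if_pos rfl

theorem factorAt_succ (k : ℕ) (y : ℕ → M) :
    factorAt η k y (k + 1) = (η (y (k + 1) * y k)).1 := by
  simp [factorAt]

theorem factorAt_of_gt {k i : ℕ} (y : ℕ → M) (hi : k + 1 < i) : factorAt η k y i = y i := by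
  rw [factorAt, if_neg (by omega), if_neg (by omega)]

theorem entry_append_factor (w : List M) (b a : M) (e : List M) :
    entry (w ++ (η (b * a)).1 :: (η (b * a)).2 :: e) =
      factorAt η e.length (entry (w ++ b :: a :: e)) := by
  funext i
  rw [factorAt, entry_append_cons_cons, entry_append_cons_cons_succ]
  split_ifs with h h'
  · rw [h, entry_append_cons_cons]
  · rw [h', entry_append_cons_cons_succ]
  · rcases lt_or_gt_of_ne h with hlt | hgt
    · simp [entry, List.getElem?_append, hlt]
    · obtain ⟨n, rfl⟩ : ∃ n, i = e.length + (n + 2) := ⟨i - e.length - 2, by omega⟩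
      simp [entry, List.getElem?_append]

theorem IsFactorable.stablePair_factorAt (hfac : IsFactorable E η) {y : ℕ → M} {j : ℕ}
    (hs : StablePair η (y (j + 2)) (y (j + 1))) (hgeo : Geodesic E (y (j + 1)) (y j))
    (hgeo' : Geodesic E (factorAt η j y (j + 2)) (factorAt η j y (j + 1))) :
    StablePair η (factorAt η (j + 1) (factorAt η j y) (j + 1))
      (factorAt η (j + 1) (factorAt η j y) j) := by
  rw [factorAt_of_gt y (by omega), factorAt_succ] at hgeo'
  have hlow : factorAt η (j + 1) (factorAt η j y) j = factorAt η j y j := by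
    rw [factorAt, if_neg (by omega), if_neg (by omega)]
  rw [factorAt_self, hlow, factorAt_self, factorAt_succ, factorAt_of_gt y (by omega)]
  exact hfac.stablePair_right hs hgeo hgeo'

theorem not_isDip_of_factorAt (hfac : IsFactorable E η) {k : ℕ → ℕ} {Y : ℕ → ℕ → M}
    (hY : ∀ t, Y (t + 1) = factorAt η (k (t + 1)) (Y t))
    (hgeo : ∀ t, Geodesic E (Y t (k (t + 1) + 1)) (Y t (k (t + 1))))
    (hstable : ∀ t, StablePair η (Y t (k t + 1)) (Y t (k t)))
    (hunstable : ∀ t i, k t = i + 1 → ¬ StablePair η (Y t (i + 1)) (Y t i)) {j s q : ℕ} :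
    ¬ IsDip k j s q := fun h => by
  obtain ⟨p, rfl⟩ : ∃ p, q = p + 1 := Nat.exists_eq_add_one.2 (Nat.zero_lt_of_lt h.lt)
  have hconst : ∀ r, s ≤ r → r ≤ p → ∀ i, j < i → Y r i = Y s i := fun r hsr => by
    induction r, hsr using Nat.le_induction with
    | base => exact fun _ _ _ => rfl
    | succ r hsr ih =>
      intro hrp i hi
      have hkr := h.bottom (r + 1) (by omega) (by omega)
      rw [hY, factorAt_of_gt _ (by omega), ih (by omega) i hi]
  have hsp : s ≤ p := Nat.le_of_lt_succ h.lt
  have hYp : Y (p + 1) = factorAt η j (Y p) := h.climb ▸ hY p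
  have hYq : Y (p + 2) = factorAt η (j + 1) (factorAt η j (Y p)) := by
    rw [hY, h.finish, hYp]
  have hs : StablePair η (Y p (j + 2)) (Y p (j + 1)) := by
    rw [hconst p hsp le_rfl _ (by omega), hconst p hsp le_rfl _ (by omega)]
    simpa only [h.start] using hstable s
  have hgeo₁ : Geodesic E (Y p (j + 1)) (Y p j) := h.climb ▸ hgeo p
  have hgeo₂ : Geodesic E (factorAt η j (Y p) (j + 2)) (factorAt η j (Y p) (j + 1)) := by
    simpa only [hYp, h.finish] using hgeo (p + 1)
  refine hunstable (p + 2) j h.finish ?_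
  rw [hYq]
  exact hfac.stablePair_factorAt hs hgeo₁ hgeo₂

end Entries

section Noetherian

variable {M : Type*} [Monoid M] {E : Set M} {η : M → M × M} {x z : List M}

/-- The relation `x ⊢ z` between two distinct redundant cells. -/
structure ProperStep (E : Set M) (η : M → M × M) (x z : List M) : Prop where
  one_notMem : (1 : M) ∉ x
  redundant_left : Redundant E η x
  redundant_right : Redundant E η z
  barDiff_ne_zero : barDiff (matchMu E η x) z ≠ 0
  ne : z ≠ x

theorem ProperStep.matchMu_ne_nil (hη : IsFactorizationMap E η) (hrec : RecognitionPrinciple E η)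
    (h : ProperStep E η x z) : matchMu E η x ≠ [] := by
  have hlen := (h.redundant_left.collapsible_matchMu hη hrec h.one_notMem).2.1
  exact List.ne_nil_of_length_eq_add_one hlen

theorem ProperStep.length_eq (hη : IsFactorizationMap E η) (hrec : RecognitionPrinciple E η)
    (h : ProperStep E η x z) : z.length = x.length := by
  obtain ⟨i, hi, rfl⟩ := exists_dPart_eq_of_barDiff_ne_zero h.barDiff_ne_zero
  have hlen := (h.redundant_left.collapsible_matchMu hη hrec h.one_notMem).2.1
  have := length_dPart (h.matchMu_ne_nil hη hrec) hi
  omega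

theorem ProperStep.cellNorm_le (hgen : IsGenSet E) (hη : IsFactorizationMap E η)
    (hrec : RecognitionPrinciple E η) (h : ProperStep E η x z) :
    cellNorm E z ≤ cellNorm E x := by
  obtain ⟨i, hi, rfl⟩ := exists_dPart_eq_of_barDiff_ne_zero h.barDiff_ne_zero
  exact (cellNorm_dPart_le hgen (h.matchMu_ne_nil hη hrec) hi).trans_eq
    (h.redundant_left.cellNorm_matchMu hη)

theorem ProperStep.exists_redundantAt (h1 : (1 : M) ∉ E) (hgen : IsGenSet E)
    (hη : IsFactorizationMap E η) (hrec : RecognitionPrinciple E η) (h : ProperStep E η x z)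
    (hN : cellNorm E z = cellNorm E x) :
    ∃ w b a e, matchMu E η x = w ++ b :: a :: e ∧ z = w ++ b * a :: e ∧ Geodesic E b a ∧
      RedundantAt E η (b * a) e ∧ (e.length < height E η x ∨ e.length = height E η x + 1) := by
  obtain ⟨i, hi, rfl⟩ := exists_dPart_eq_of_barDiff_ne_zero h.barDiff_ne_zero
  have hx := h.redundant_left
  obtain ⟨hc, -, hheight⟩ := hx.collapsible_matchMu hη hrec h.one_notMem
  obtain ⟨w, b, a, e, hμ, rfl, hd, hgeo, hr, hle⟩ := hc.exists_redundantAt_of_dPart hgen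
    (one_notMem_matchMu h1 hgen hη h.one_notMem) hi h.redundant_right
    (hN.trans (hx.cellNorm_matchMu hη).symm)
  have hne : e.length ≠ height E η x := fun he => h.ne (he ▸ hx.dPart_matchMu hη)
  exact ⟨w, b, a, e, hμ, hd, hgeo, hr, by omega⟩

theorem ProperStep.height_lt_or_eq (h1 : (1 : M) ∉ E) (hgen : IsGenSet E)
    (hη : IsFactorizationMap E η) (hrec : RecognitionPrinciple E η) (h : ProperStep E η x z)
    (hN : cellNorm E z = cellNorm E x) :
    height E η z < height E η x ∨ height E η z = height E η x + 1 := by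
  obtain ⟨w, b, a, e, -, rfl, -, hr, hheight⟩ := h.exists_redundantAt h1 hgen hη hrec hN
  rwa [hr.height_eq]

theorem ProperStep.geodesic_entry (h1 : (1 : M) ∉ E) (hgen : IsGenSet E)
    (hη : IsFactorizationMap E η) (hrec : RecognitionPrinciple E η) (h : ProperStep E η x z)
    (hN : cellNorm E z = cellNorm E x) :
    Geodesic E (entry (matchMu E η x) (height E η z + 1))
      (entry (matchMu E η x) (height E η z)) := by
  obtain ⟨w, b, a, e, hμ, rfl, hgeo, hr, -⟩ := h.exists_redundantAt h1 hgen hη hrec hN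
  rwa [hμ, hr.height_eq, entry_append_cons_cons, entry_append_cons_cons_succ]

theorem ProperStep.entry_matchMu (h1 : (1 : M) ∉ E) (hgen : IsGenSet E)
    (hη : IsFactorizationMap E η) (hrec : RecognitionPrinciple E η) (h : ProperStep E η x z)
    (hN : cellNorm E z = cellNorm E x) :
    entry (matchMu E η z) = factorAt η (height E η z) (entry (matchMu E η x)) := by
  obtain ⟨w, b, a, e, hμ, rfl, -, hr, -⟩ := h.exists_redundantAt h1 hgen hη hrec hN
  rw [hμ, hr.matchMu_eq, hr.height_eq, entry_append_factor]

theorem Redundant.stablePair_entry_matchMu (hη : IsFactorizationMap E η) {l : List M}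
    (hl : Redundant E η l) :
    StablePair η (entry (matchMu E η l) (height E η l + 1))
      (entry (matchMu E η l) (height E η l)) := by
  obtain ⟨w, m, e, rfl, h⟩ := hl.exists_redundantAt
  rw [h.matchMu_eq, h.height_eq, entry_append_cons_cons, entry_append_cons_cons_succ]
  exact hη.stablePair m

theorem Redundant.not_stablePair_entry_matchMu (hη : IsFactorizationMap E η)
    (hrec : RecognitionPrinciple E η) {l : List M} (hl : Redundant E η l) (hone : (1 : M) ∉ l)
    {i : ℕ} (hi : height E η l = i + 1) :
    ¬ StablePair η (entry (matchMu E η l) (i + 1)) (entry (matchMu E η l) i) := by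
  obtain ⟨w, m, e, rfl, h⟩ := hl.exists_redundantAt
  simp only [List.mem_append, List.mem_cons, not_or] at hone
  have hc := h.collapsibleAt hη hrec (Ne.symm hone.2.1)
  rw [h.height_eq] at hi
  obtain ⟨a, e, rfl⟩ := List.exists_cons_of_length_eq_add_one hi
  obtain rfl : e.length = i := Nat.succ.inj hi
  have hfst := entry_append_cons_cons_succ (w ++ [(η m).1]) (η m).2 a e
  have hsnd := entry_append_cons_cons (w ++ [(η m).1]) (η m).2 a e
  rw [List.append_assoc, List.singleton_append] at hfst hsnd
  rw [h.matchMu_eq, hfst, hsnd]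
  exact (essCell_cons.1 hc.essCell).2.1 a rfl

theorem not_forall_properStep_of_cellNorm_eq (h1 : (1 : M) ∉ E) (hgen : IsGenSet E)
    (hfac : IsFactorable E η) {f : ℕ → List M} {n : ℕ} (hN : ∀ t, cellNorm E (f t) = n) :
    ¬ ∀ t, ProperStep E η (f t) (f (t + 1)) := fun h => by
  have hη := hfac.1
  have hrec := hfac.recognitionPrinciple
  have hNt : ∀ t, cellNorm E (f (t + 1)) = cellNorm E (f t) := fun t =>
    (hN (t + 1)).trans (hN t).symm
  have hlen : ∀ t, (f t).length = (f 0).length := fun t => by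
    induction t with
    | zero => rfl
    | succ t ih => rw [(h t).length_eq hη hrec, ih]
  have hbdd : BddAbove (Set.range fun t => height E η (f t)) := by
    refine ⟨(f 0).length, ?_⟩
    rintro _ ⟨t, rfl⟩
    exact hlen t ▸ (h t).redundant_left.1.le
  obtain ⟨j, s, q, hdip⟩ := exists_isDip hbdd fun t =>
    (h t).height_lt_or_eq h1 hgen hη hrec (hNt t)
  exact not_isDip_of_factorAt hfac (Y := fun t => entry (matchMu E η (f t)))
    (fun t => (h t).entry_matchMu h1 hgen hη hrec (hNt t))
    (fun t => (h t).geodesic_entry h1 hgen hη hrec (hNt t))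
    (fun t => (h t).redundant_left.stablePair_entry_matchMu hη)
    (fun t _ => (h t).redundant_left.not_stablePair_entry_matchMu hη hrec (h t).one_notMem) hdip

theorem wellFounded_properStep (h1 : (1 : M) ∉ E) (hgen : IsGenSet E) (hfac : IsFactorable E η) :
    WellFounded fun z x => ProperStep E η x z := by
  rw [wellFounded_iff_isEmpty_descending_chain]
  refine ⟨fun ⟨f, hf⟩ => ?_⟩
  have hanti : Antitone fun t => cellNorm E (f t) := antitone_nat_of_succ_le fun t =>
    (hf t).cellNorm_le hgen hfac.1 hfac.recognitionPrinciple
  obtain ⟨N, hN⟩ := WellFoundedLT.antitone_chain_condition hanti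
  exact not_forall_properStep_of_cellNorm_eq h1 hgen hfac (f := fun t => f (N + t))
    (fun t => (hN (N + t) (Nat.le_add_right N t)).symm) fun t => hf (N + t)

theorem exists_forall_ge_eq_of_barDiff_ne_zero (h1 : (1 : M) ∉ E) (hgen : IsGenSet E)
    (hfac : IsFactorable E η) {f : ℕ → List M} (hf : ∀ k, (1 : M) ∉ f k ∧ Redundant E η (f k))
    (hstep : ∀ k, barDiff (matchMu E η (f k)) (f (k + 1)) ≠ 0) :
    ∃ N, ∀ k, N ≤ k → f k = f N := by
  obtain ⟨_, ⟨N, rfl⟩, hmin⟩ := (wellFounded_properStep h1 hgen hfac).has_min (Set.range f)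
    ⟨_, 0, rfl⟩
  refine ⟨N, fun k hk => ?_⟩
  induction k, hk using Nat.le_induction with
  | base => rfl
  | succ k _ ih =>
    by_contra hne
    rw [← ih] at hne hmin
    exact hmin _ ⟨k + 1, rfl⟩ ⟨(hf k).1, (hf k).2, (hf (k + 1)).2, hstep k, hne⟩

end Noetherian

/-- Let `(M, E, η)` be a factorable monoid. Then the map `μ` defined from `η` is a
noetherian, `ℤ`-compatible matching on the reduced inhomogeneous bar complex of `M`:
(i) `μ` is a well-defined involution on cells whose fixed points are exactly the
essential cells, and it exchanges collapsible cells of height `h` with redundant cells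
of height `h−1` (and vice versa); (ii) for every redundant cell `x`, the coefficient of
`x` in `d(μ(x))` is `±1`; (iii) every infinite chain `x₁ ⊢ x₂ ⊢ x₃ ⊢ ⋯` of redundant
cells is eventually constant. -/
theorem matching_of_factorable
    {M : Type*} [Monoid M] (E : Set M) (h1 : (1 : M) ∉ E) (hgen : IsGenSet E)
    (η : M → M × M) (hfac : IsFactorable E η) :
    (∀ l : List M, (1 : M) ∉ l →
      (1 : M) ∉ matchMu E η l ∧ matchMu E η (matchMu E η l) = l) ∧
    (∀ l : List M, (1 : M) ∉ l → (matchMu E η l = l ↔ EssCell E η l)) ∧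
    (∀ l : List M, (1 : M) ∉ l → Collapsible E η l →
      Redundant E η (matchMu E η l) ∧ (matchMu E η l).length + 1 = l.length ∧
      height E η (matchMu E η l) + 1 = height E η l) ∧
    (∀ l : List M, (1 : M) ∉ l → Redundant E η l →
      Collapsible E η (matchMu E η l) ∧ (matchMu E η l).length = l.length + 1 ∧
      height E η (matchMu E η l) = height E η l + 1) ∧
    (∀ l : List M, (1 : M) ∉ l → Redundant E η l →
      barDiff (matchMu E η l) l = 1 ∨ barDiff (matchMu E η l) l = -1) ∧
    (∀ f : ℕ → List M, (∀ k, (1 : M) ∉ f k ∧ Redundant E η (f k)) →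
      (∀ k, barDiff (matchMu E η (f k)) (f (k + 1)) ≠ 0) →
      ∃ N, ∀ k, N ≤ k → f k = f N) := by
  have hη := hfac.1
  have hrec := hfac.recognitionPrinciple
  refine ⟨fun l hone => ⟨one_notMem_matchMu h1 hgen hη hone, matchMu_matchMu hgen hη hrec hone⟩,
    fun l _ => matchMu_eq_self_iff,
    fun l hone hl => hl.redundant_matchMu hgen hη hrec hone,
    fun l hone hl => hl.collapsible_matchMu hη hrec hone,
    fun l hone hl => ?_,
    fun f hf hstep => exists_forall_ge_eq_of_barDiff_ne_zero h1 hgen hfac hf hstep⟩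
  rw [hl.barDiff_matchMu h1 hgen hη hrec hone]
  exact neg_one_pow_eq_or ℤ _
end

section
/- Let M be a left locally Gaussian monoid and E ⊆ M∖{1} a generating set closed under llcm and left-complement. Let x ∈ M∖{1} with E-normal form NF(x) = x_p⋯x_1, let a ∈ E, and let NF(x·a) = y_q⋯y_1 be the E-normal form of x·a. Then either x_1·a = y_1, or there exists a generator z ∈ E such that (z, y_1) is an E-normal sequence with z·y_1 = x_1·a (i.e., NF(x_1·a) = z·y_1). -/
/-- `x` left-divides `y`: `y = x·z` for some `z`. -/
def LDvd {M : Type*} [Monoid M] (x y : M) : Prop := ∃ z, y = x * z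

/-- `y` right-divides `x`: `x = z·y` for some `z`. -/
def RDvd {M : Type*} [Monoid M] (y x : M) : Prop := ∃ z, x = z * y

/-- `c` is a common left-multiple of `a` and `b`. -/
def IsCLM {M : Type*} [Monoid M] (a b c : M) : Prop := RDvd a c ∧ RDvd b c

/-- `c` is a least common left-multiple (llcm) of `a` and `b`: a common left-multiple
that right-divides every common left-multiple. -/
def IsLLCM {M : Type*} [Monoid M] (a b c : M) : Prop :=
  IsCLM a b c ∧ ∀ d, IsCLM a b d → RDvd c d

/-- `M` is right-cancellative. -/
def RightCancellative (M : Type*) [Monoid M] : Prop :=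
  ∀ a b c : M, a * c = b * c → a = b

/-- `M` is left-noetherian: there is no infinite strictly descending chain with respect
to proper left-divisibility. -/
def LeftNoetherian (M : Type*) [Monoid M] : Prop :=
  ¬ ∃ f : ℕ → M, ∀ k, LDvd (f (k + 1)) (f k) ∧ f (k + 1) ≠ f k

/-- `M` is left locally Gaussian: right-cancellative, left-noetherian, and any two
elements admitting a common left-multiple admit a least common left-multiple. -/
def LeftLocallyGaussian (M : Type*) [Monoid M] : Prop :=
  RightCancellative M ∧ LeftNoetherian M ∧
  ∀ a b : M, (∃ c, IsCLM a b c) → ∃ c, IsLLCM a b c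

/-- `E` is closed under least common left-multiples. -/
def ClosedLLCM {M : Type*} [Monoid M] (E : Set M) : Prop :=
  ∀ x ∈ E, ∀ y ∈ E, ∀ c, IsLLCM x y c → c ∈ E

/-- `E` is closed under left-complements: if `c = llcm(x,y)` and `c = w·y`, then the
left-complement `w = x/y` lies in `E ∪ {1}`. -/
def ClosedLComp {M : Type*} [Monoid M] (E : Set M) : Prop :=
  ∀ x ∈ E, ∀ y ∈ E, ∀ c w, IsLLCM x y c → c = w * y → (w ∈ E ∨ w = 1)

/-- `x ⊲_E y`: every right-divisor of `x·y` lying in `E` right-divides `y`. -/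
def Tri {M : Type*} [Monoid M] (E : Set M) (x y : M) : Prop :=
  ∀ d ∈ E, RDvd d (x * y) → RDvd d y

/-- The list `[x_p, …, x_1]` is an `E`-normal sequence: all entries lie in `E` and
`x_{i+1} ⊲_E x_i` for all `i`. -/
def ENormalSeq {M : Type*} [Monoid M] (E : Set M) (l : List M) : Prop :=
  (∀ a ∈ l, a ∈ E) ∧ l.Chain' (Tri E)

/-!
The last letter of a normal form is the greatest right-divisor in `E` of its product. For if
`d ∈ E` right-divides `x·y`, then so does `llcm(d,y) = (d/y)·y`, hence `d/y ∈ E ∪ {1}`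
right-divides `x`; by induction it right-divides the last letter `t` of `x`, so `d` right-divides
`t·y`, and `t ⊲_E y` makes it right-divide `y`.

As `a` right-divides `x·a`, it right-divides `y₁`, say `y₁ = w·a`; cancelling `a` shows that `w`
right-divides `x`. Since `w ∈ E ∪ {1}`, it right-divides `x₁`, say `x₁ = v·w`, so that
`x₁·a = v·y₁` with `v ∈ E ∪ {1}`. Finally, `v ⊲_E y₁` because `v·y₁ = x₁·a` right-divides `x·a`,
all of whose right-divisors in `E` right-divide `y₁`.
-/

section

variable {M : Type*} [Monoid M] {E : Set M}

namespace RDvd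

theorem refl (x : M) : RDvd x x :=
  ⟨1, (one_mul x).symm⟩

theorem one_left (x : M) : RDvd 1 x :=
  ⟨x, (mul_one x).symm⟩

theorem mul_left (x y : M) : RDvd y (x * y) :=
  ⟨x, rfl⟩

theorem trans {x y z : M} : RDvd x y → RDvd y z → RDvd x z := by
  rintro ⟨u, rfl⟩ ⟨v, rfl⟩
  exact ⟨v * u, (mul_assoc v u x).symm⟩

theorem mul_right {x y : M} (h : RDvd x y) (c : M) : RDvd (x * c) (y * c) := by
  obtain ⟨u, rfl⟩ := h
  exact ⟨u, mul_assoc u x c⟩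

theorem of_mul_right (hcancel : RightCancellative M) {x y c : M}
    (h : RDvd (x * c) (y * c)) : RDvd x y := by
  obtain ⟨u, hu⟩ := h
  exact ⟨u, hcancel _ _ c (by rw [hu, mul_assoc])⟩

end RDvd

theorem IsLLCM.of_rdvd {x y : M} (h : RDvd y x) : IsLLCM x y x :=
  ⟨⟨RDvd.refl x, h⟩, fun _ hd => hd.1⟩

theorem ClosedLComp.mem_or_eq_one_of_mul_mem (hcc : ClosedLComp E) {w b : M}
    (hb : b ∈ E ∨ b = 1) (hwb : w * b ∈ E) : w ∈ E ∨ w = 1 := by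
  rcases hb with hb | rfl
  · exact hcc _ hwb b hb _ w (IsLLCM.of_rdvd (RDvd.mul_left w b)) rfl
  · exact Or.inl (by rwa [mul_one] at hwb)

/-- `E` has conditional llcms: two elements of `E` with a common left-multiple in the ambient
monoid have an llcm there. It is not part of the definition that the llcm lies in `E`. -/
def HasConditionalLLCM (E : Set M) : Prop :=
  ∀ x ∈ E, ∀ y ∈ E, (∃ c, IsCLM x y c) → ∃ c, IsLLCM x y c

/-- `t` is an `E`-tail of `x`: a greatest element, for right-divisibility, among the
right-divisors of `x` lying in `E`. It describes the last letter of a normal form of `x` without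
reference to the other letters. -/
structure IsTail (E : Set M) (x t : M) : Prop where
  mem : t ∈ E
  rdvd : RDvd t x
  rdvd_of_mem : ∀ d ∈ E, RDvd d x → RDvd d t

namespace IsTail

theorem self {x : M} (hx : x ∈ E) : IsTail E x x :=
  ⟨hx, RDvd.refl x, fun _ _ h => h⟩

theorem rdvd_of_mem_or_eq_one {x t d : M} (ht : IsTail E x t) (hd : d ∈ E ∨ d = 1)
    (hdx : RDvd d x) : RDvd d t := by
  rcases hd with hd | rfl
  · exact ht.rdvd_of_mem d hd hdx
  · exact RDvd.one_left t

theorem tri_of_mul_rdvd {x t v : M} (ht : IsTail E x t) (h : RDvd (v * t) x) : Tri E v t :=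
  fun d hd hdvt => ht.rdvd_of_mem d hd (hdvt.trans h)

theorem mul_of_tri (hcancel : RightCancellative M) (hllcm : HasConditionalLLCM E)
    (hcc : ClosedLComp E) {x t y : M} (ht : IsTail E x t) (hy : y ∈ E) (hty : Tri E t y) :
    IsTail E (x * y) y := by
  refine ⟨hy, RDvd.mul_left x y, fun d hd hdxy => ?_⟩
  have hclm : IsCLM d y (x * y) := ⟨hdxy, RDvd.mul_left x y⟩
  obtain ⟨c, hc⟩ := hllcm d hd y hy ⟨_, hclm⟩
  obtain ⟨w, rfl⟩ := hc.1.2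
  have hwx : RDvd w x := (hc.2 _ hclm).of_mul_right hcancel
  have hwt : RDvd w t := ht.rdvd_of_mem_or_eq_one (hcc d hd y hy _ w hc rfl) hwx
  exact hty d hd (hc.1.1.trans (hwt.mul_right y))

theorem exists_mul_eq_mul (hcancel : RightCancellative M) (hcc : ClosedLComp E)
    {x t a s : M} (ht : IsTail E x t) (ha : a ∈ E) (hs : IsTail E (x * a) s) :
    ∃ v, (v ∈ E ∨ v = 1) ∧ Tri E v s ∧ v * s = t * a := by
  obtain ⟨w, rfl⟩ : RDvd a s := hs.rdvd_of_mem a ha (RDvd.mul_left x a)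
  have hw : w ∈ E ∨ w = 1 := hcc.mem_or_eq_one_of_mul_mem (Or.inl ha) hs.mem
  have hwx : RDvd w x := hs.rdvd.of_mul_right hcancel
  obtain ⟨v, rfl⟩ : RDvd w t := ht.rdvd_of_mem_or_eq_one hw hwx
  have hv : v * (w * a) = v * w * a := (mul_assoc v w a).symm
  exact ⟨v, hcc.mem_or_eq_one_of_mul_mem hw ht.mem,
    hs.tri_of_mul_rdvd (hv ▸ ht.rdvd.mul_right a), hv⟩

end IsTail

namespace ENormalSeq

theorem pair {x y : M} (hx : x ∈ E) (hy : y ∈ E) (h : Tri E x y) : ENormalSeq E [x, y] :=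
  ⟨by simp [hx, hy], List.isChain_pair.2 h⟩

theorem left_of_append {l₁ l₂ : List M} (h : ENormalSeq E (l₁ ++ l₂)) : ENormalSeq E l₁ :=
  ⟨fun b hb => h.1 b (List.mem_append_left l₂ hb), h.2.left_of_append⟩

theorem tri_of_append {l₁ l₂ : List M} {x y : M}
    (h : ENormalSeq E (l₁ ++ [x] ++ y :: l₂)) : Tri E x y :=
  (List.isChain_append.1 h.2).2.2 x (by simp) y (by simp)

theorem isTail_prod (hcancel : RightCancellative M) (hllcm : HasConditionalLLCM E)
    (hcc : ClosedLComp E) {l : List M} {x : M} (h : ENormalSeq E (l ++ [x])) :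
    IsTail E (l ++ [x]).prod x := by
  have hx : x ∈ E := h.1 x (by simp)
  induction l using List.reverseRecOn generalizing x with
  | nil => simpa using IsTail.self hx
  | append_singleton l y ih =>
    have hy : IsTail E (l ++ [y]).prod y := ih h.left_of_append (h.1 y (by simp))
    rw [List.prod_append, List.prod_singleton]
    exact hy.mul_of_tri hcancel hllcm hcc hx h.tri_of_append

end ENormalSeq

theorem last_letter_of_normalForm_mul_generator_general (hcancel : RightCancellative M)
    (hllcm : HasConditionalLLCM E) (hcc : ClosedLComp E)
    {x : M} {l : List M} {x1 : M} (hnf : ENormalSeq E (l ++ [x1])) (hprod : (l ++ [x1]).prod = x)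
    {a : M} (ha : a ∈ E) {m : List M} {y1 : M} (hnf' : ENormalSeq E (m ++ [y1]))
    (hprod' : (m ++ [y1]).prod = x * a) :
    x1 * a = y1 ∨ ∃ z ∈ E, ENormalSeq E [z, y1] ∧ z * y1 = x1 * a := by
  have hx1 : IsTail E x x1 := hprod ▸ hnf.isTail_prod hcancel hllcm hcc
  have hy1 : IsTail E (x * a) y1 := hprod' ▸ hnf'.isTail_prod hcancel hllcm hcc
  obtain ⟨z, hz | rfl, htri, heq⟩ := hx1.exists_mul_eq_mul hcancel hcc ha hy1
  · exact Or.inr ⟨z, hz, ENormalSeq.pair hz hy1.mem htri, heq⟩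
  · exact Or.inl (by rw [← heq, one_mul])

end

/-- Let `M` be a left locally Gaussian monoid and `E ⊆ M∖{1}` a generating set closed
under llcm and left-complement. Let `x ≠ 1` have `E`-normal form `x_p⋯x_1` and let
`a ∈ E`, with `NF(x·a) = y_q⋯y_1`. Then either `x_1·a = y_1`, or there is `z ∈ E` such
that `(z, y_1)` is `E`-normal with `z·y_1 = x_1·a` (i.e. `NF(x_1·a) = z·y_1`). -/
theorem last_letter_of_normalForm_mul_generator
    {M : Type*} [Monoid M] (hM : LeftLocallyGaussian M)
    (E : Set M) (h1 : (1 : M) ∉ E) (hgen : IsGenSet E)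
    (hcl : ClosedLLCM E) (hcc : ClosedLComp E)
    (x : M) (hx : x ≠ 1) (l : List M) (x1 : M)
    (hnf : ENormalSeq E (l ++ [x1])) (hprod : (l ++ [x1]).prod = x)
    (a : M) (ha : a ∈ E)
    (m : List M) (y1 : M)
    (hnf' : ENormalSeq E (m ++ [y1])) (hprod' : (m ++ [y1]).prod = x * a) :
    x1 * a = y1 ∨ ∃ z ∈ E, ENormalSeq E [z, y1] ∧ z * y1 = x1 * a :=
  last_letter_of_normalForm_mul_generator_general hM.1 (fun b _ c _ => hM.2.2 b c) hcc
    hnf hprod ha hnf' hprod'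
end

section
/- Let M be a left locally Gaussian monoid and E ⊆ M∖{1} a generating set closed under llcm and left-complement. Then for every x ∈ M∖{1}, the length p of the E-normal form x = x_p⋯x_1 equals the word length N_E(x), i.e., the least number of elements of E whose product is x. -/
/-!
Write a shortest word for `x` as `m = m'·d` and the normal form as `l = l'·y`. The entry `y` absorbs
every right-divisor of `l.prod` lying in `E`; when `l.prod * u = m.prod` with `u` in the submonoid
generated by `E`, the left-complement of `d` by `u` is such a right-divisor. Hence cancelling `d`
removes at most `y` from `l` and only changes the remainder `u`, which stays in that submonoid. When
`m` is exhausted, the entries still in `l` are units, but `E` contains none.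
-/

section

variable {M : Type*} [Monoid M] {A B E : Set M}

/-- Left-complements of elements of `A` by elements of `B` and vice versa exist and stay in `A` and
`B` respectively: every common left-multiple `y * a = z * b` is a left-multiple of one with
cofactors `b' ∈ B` and `a' ∈ A`, which play the roles of `b / a` and `a / b`. Leastness of
`b' * a` is not required: passing to generated submonoids is then a matter of pasting squares. -/
def HasLeftComplements (A B : Set M) : Prop :=
  ∀ a ∈ A, ∀ b ∈ B, ∀ y z, y * a = z * b →
    ∃ a' ∈ A, ∃ b' ∈ B, b' * a = a' * b ∧ ∃ t, y = t * b' ∧ z = t * a'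

theorem HasLeftComplements.closure_right (h : HasLeftComplements A B) :
    HasLeftComplements A (Submonoid.closure B : Set M) := by
  intro a ha b hb
  induction hb using Submonoid.closure_induction generalizing a with
  | mem b hb =>
    intro y z hyz
    obtain ⟨a', ha', b', hb', hab, hfactor⟩ := h a ha b hb y z hyz
    exact ⟨a', ha', b', Submonoid.subset_closure hb', hab, hfactor⟩
  | one =>
    intro y z hyz
    exact ⟨a, ha, 1, one_mem _, by simp, y, by simp, by simp [hyz]⟩
  | mul b₁ b₂ _ _ ih₁ ih₂ =>
    intro y z hyz
    rw [← mul_assoc] at hyz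
    obtain ⟨a₁, ha₁, b₂', hb₂', hab₂, t, rfl, hz⟩ := ih₂ a ha y (z * b₁) hyz
    obtain ⟨a', ha', b₁', hb₁', hab₁, s, rfl, rfl⟩ := ih₁ a₁ ha₁ t z hz.symm
    refine ⟨a', ha', b₁' * b₂', mul_mem hb₁' hb₂', ?_, s, mul_assoc .., rfl⟩
    calc b₁' * b₂' * a = b₁' * a₁ * b₂ := by rw [mul_assoc, hab₂, mul_assoc]
      _ = a' * (b₁ * b₂) := by rw [hab₁, mul_assoc]

theorem IsLLCM.symm {a b c : M} (h : IsLLCM a b c) : IsLLCM b a c :=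
  ⟨h.1.symm, fun d hd => h.2 d hd.symm⟩

theorem ClosedLComp.hasLeftComplements [IsRightCancelMul M] (hcc : ClosedLComp E)
    (hllcm : ∀ a ∈ E, ∀ b ∈ E, (∃ c, IsCLM a b c) → ∃ c, IsLLCM a b c) :
    HasLeftComplements (insert 1 E) (insert 1 E) := by
  rintro a (rfl | ha) b hb y z hyz
  · exact ⟨1, Set.mem_insert _ _, b, hb, by simp, z, by simpa using hyz, by simp⟩
  obtain rfl | hb := hb
  · exact ⟨a, .inr ha, 1, Set.mem_insert _ _, by simp, y, by simp, by simpa using hyz.symm⟩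
  have hclm : IsCLM a b (y * a) := ⟨⟨y, rfl⟩, ⟨z, hyz⟩⟩
  obtain ⟨c, hc⟩ := hllcm a ha b hb ⟨_, hclm⟩
  obtain ⟨⟨b', hb'⟩, ⟨a', ha'⟩⟩ := hc.1
  obtain ⟨t, ht⟩ := hc.2 _ hclm
  refine ⟨a', (hcc a ha b hb c a' hc ha').symm, b', (hcc b hb a ha c b' hc.symm hb').symm,
    hb'.symm.trans ha', t, mul_right_cancel (b := a) ?_, mul_right_cancel (b := b) ?_⟩
  · rw [ht, hb', mul_assoc]
  · rw [← hyz, ht, ha', mul_assoc]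

theorem ClosedLComp.mem_insert_one_of_mul_mem (hcc : ClosedLComp E) {s w : M}
    (hw : w ∈ insert 1 E) (hsw : s * w ∈ E) : s ∈ insert 1 E := by
  obtain rfl | hw := hw
  · exact .inr (by simpa using hsw)
  · have hllcm : IsLLCM (s * w) w (s * w) := ⟨⟨⟨1, by simp⟩, ⟨s, rfl⟩⟩, fun _ hd => hd.1⟩
    exact (hcc _ hsw w hw _ s hllcm rfl).symm

-- A unit right-divides `1`, so `1` is an llcm of the unit with itself.
theorem ClosedLLCM.not_isUnit (hcl : ClosedLLCM E) (h1 : (1 : M) ∉ E) {e : M} (he : e ∈ E) :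
    ¬IsUnit e := by
  rintro ⟨e, rfl⟩
  have hdvd : RDvd (e : M) 1 := ⟨↑e⁻¹, by simp⟩
  exact h1 (hcl e he e he 1 ⟨⟨hdvd, hdvd⟩, fun d _ => ⟨d, by simp⟩⟩)

namespace ENormalSeq

variable {l m : List M} {d n u y : M}

theorem of_append_left {l' : List M} (h : ENormalSeq E (l ++ l')) : ENormalSeq E l :=
  ⟨fun a ha => h.1 a (List.mem_append_left _ ha), (List.isChain_append.1 h.2).1⟩

theorem tri_of_append_pair {x : M} (h : ENormalSeq E (l ++ [x] ++ [y])) : Tri E x y :=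
  (List.isChain_append.1 h.2).2.2 x (by simp) y (by simp)

theorem rdvd_last (hE : HasLeftComplements (insert 1 E) (insert 1 E))
    (hl : ENormalSeq E (l ++ [y])) (hd : d ∈ insert 1 E) (hdvd : RDvd d (l ++ [y]).prod) :
    RDvd d y := by
  induction l using List.reverseRecOn generalizing y d with
  | nil => simpa using hdvd
  | append_singleton l x ih =>
    obtain rfl | hdE := hd
    · exact ⟨y, (mul_one y).symm⟩
    obtain ⟨a, ha⟩ := hdvd
    rw [List.prod_append, List.prod_singleton] at ha
    obtain ⟨w, hw, v, -, hvw, t, -, ht⟩ := hE d (.inr hdE) y (.inr (hl.1 y (by simp))) a _ ha.symm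
    obtain ⟨s, hs⟩ : RDvd w x := ih hl.of_append_left hw ⟨t, ht⟩
    refine hl.tri_of_append_pair d hdE ⟨s * v, ?_⟩
    calc x * y = s * (w * y) := by rw [hs, mul_assoc]
      _ = s * v * d := by rw [← hvw, mul_assoc]

theorem exists_prod_mul_eq_of_mul_eq [IsRightCancelMul M] (hcc : ClosedLComp E)
    (hE : HasLeftComplements (insert 1 E) (insert 1 E)) (hl : ENormalSeq E (l ++ [y]))
    (hu : u ∈ Submonoid.closure E) (hd : d ∈ E) (h : (l ++ [y]).prod * u = n * d) :
    ∃ u' ∈ Submonoid.closure E, l.prod * u' = n := by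
  have hE' := hE.closure_right
  rw [Submonoid.closure_insert_one] at hE'
  obtain ⟨w, hw, v, hv, -, t, rfl, ht⟩ := hE' d (.inr hd) u hu n _ h.symm
  obtain ⟨s, rfl⟩ : RDvd w y := hl.rdvd_last hE hw ⟨t, ht⟩
  have hs : s ∈ Submonoid.closure E := by
    rw [← Submonoid.closure_insert_one]
    exact Submonoid.subset_closure (hcc.mem_insert_one_of_mul_mem hw (hl.1 _ (by simp)))
  have hls : l.prod * s = t := mul_right_cancel (b := w) (by simpa [mul_assoc] using ht)
  exact ⟨s * v, mul_mem hs hv, by rw [← mul_assoc, hls]⟩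

theorem length_le [IsRightCancelMul M] (hunit : ∀ e ∈ E, ¬IsUnit e) (hcc : ClosedLComp E)
    (hE : HasLeftComplements (insert 1 E) (insert 1 E)) (hl : ENormalSeq E l)
    (hm : ∀ b ∈ m, b ∈ E) (hu : u ∈ Submonoid.closure E) (h : l.prod * u = m.prod) :
    l.length ≤ m.length := by
  induction m using List.reverseRecOn generalizing l u with
  | nil =>
    cases l with
    | nil => rfl
    | cons a l =>
      rw [List.prod_cons, List.prod_nil, mul_assoc] at h
      exact absurd (IsUnit.of_mul_eq_one _ h) (hunit a (hl.1 a List.mem_cons_self))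
  | append_singleton m d ih =>
    obtain rfl | ⟨l, y, rfl⟩ := List.eq_nil_or_concat' l
    · exact Nat.zero_le _
    rw [List.prod_append (l₁ := m), List.prod_singleton] at h
    obtain ⟨u', hu', hlu'⟩ := hl.exists_prod_mul_eq_of_mul_eq hcc hE hu (hm d (by simp)) h
    simpa using ih hl.of_append_left (fun b hb => hm b (List.mem_append_left _ hb)) hu' hlu'

end ENormalSeq

theorem length_normalForm_eq_wordLength_general [IsRightCancelMul M]
    (hllcm : ∀ a ∈ E, ∀ b ∈ E, (∃ c, IsCLM a b c) → ∃ c, IsLLCM a b c)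
    (hunit : ∀ e ∈ E, ¬IsUnit e) (hcc : ClosedLComp E) {l : List M} (hl : ENormalSeq E l) :
    l.length = wordLength E l.prod := by
  symm
  apply IsLeast.csInf_eq
  refine ⟨⟨l, hl.1, rfl, rfl⟩, ?_⟩
  rintro _ ⟨m, hm, rfl, hprod⟩
  exact hl.length_le hunit hcc (hcc.hasLeftComplements hllcm) hm (one_mem _)
    (by rw [mul_one, hprod])

end

/-- Let `M` be a left locally Gaussian monoid and `E ⊆ M∖{1}` a generating set closed
under llcm and left-complement. Then for every `x ≠ 1` the length of the `E`-normal
form of `x` equals the word length `N_E(x)`. -/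
theorem length_normalForm_eq_wordLength
    {M : Type*} [Monoid M] (hM : LeftLocallyGaussian M)
    (E : Set M) (h1 : (1 : M) ∉ E) (hgen : IsGenSet E)
    (hcl : ClosedLLCM E) (hcc : ClosedLComp E)
    (x : M) (hx : x ≠ 1) (l : List M)
    (hnf : ENormalSeq E l) (hprod : l.prod = x) :
    l.length = wordLength E x := by
  have : IsRightCancelMul M := ⟨fun c a b => hM.1 a b c⟩
  exact hprod ▸ length_normalForm_eq_wordLength_general (fun a _ b _ => hM.2.2 a b)
    (fun _ => hcl.not_isUnit h1) hcc hnf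
end

section
/- Let M be a left locally Gaussian monoid, and let x, y ∈ M admit a common left-multiple with least common left-multiple a·x = b·y. Then for every z ∈ M, the elements x·z and y·z admit a least common left-multiple, and it is equal to a·x·z. -/
section RightRegular

variable {M : Type*} [Monoid M] {x y c z : M}

theorem mul_rDvd_mul_iff_right (hz : IsRightRegular z) :
    RDvd (x * z) (y * z) ↔ RDvd x y :=
  exists_congr fun w => by rw [← mul_assoc, hz.eq_iff]

theorem isCLM_mul_iff_right (hz : IsRightRegular z) :
    IsCLM (x * z) (y * z) (c * z) ↔ IsCLM x y c :=
  and_congr (mul_rDvd_mul_iff_right hz) (mul_rDvd_mul_iff_right hz)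

theorem llcm_mul_right_general (hz : IsRightRegular z) (h : IsLLCM x y c) :
    IsLLCM (x * z) (y * z) (c * z) := by
  refine ⟨(isCLM_mul_iff_right hz).2 h.1, fun d hd => ?_⟩
  obtain ⟨u, rfl⟩ := hd.1
  rw [← mul_assoc] at hd ⊢
  have hux : IsCLM x y (u * x) := (isCLM_mul_iff_right hz).1 hd
  exact (mul_rDvd_mul_iff_right hz).2 (h.2 (u * x) hux)

end RightRegular

/-- Let `M` be a left locally Gaussian monoid and let `x, y ∈ M` admit a common
left-multiple, with least common left-multiple `a·x = b·y`. Then for every `z ∈ M`,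
the elements `x·z` and `y·z` admit a least common left-multiple, equal to `a·x·z`. -/
theorem llcm_mul_right
    {M : Type*} [Monoid M] (hM : LeftLocallyGaussian M)
    (x y a b : M) (hab : a * x = b * y) (hlcm : IsLLCM x y (a * x)) (z : M) :
    IsLLCM (x * z) (y * z) (a * x * z) :=
  llcm_mul_right_general (fun u v => hM.1 u v z) hlcm
end
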